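/- arXiv:1602.06445 — 8 statements merged into one kernel-verified Lean document; each statement's English description precedes it below -/
import Mathlib

section
/- The real number [ √(124√5 − 265)·log(1 + √5/2 − √(4√5+5)/2) − √(124√5 + 265)·arccos(√5/2 − 1) ] / (55√11) + 1/11 is transcendental (over ℚ). -/
open Real

/-- Division of an entire function by a power of a linear factor. -/
theorem entire_div_pow (n : ℕ) (a : ℂ) : ∀ f : ℂ → ℂ, Differentiable ℂ f →
    (n : ℕ∞) ≤ analyticOrderAt f a →
    ∃ g : ℂ → ℂ, Differentiable ℂ g ∧ ∀ z, f z = (z - a) ^ n * g z := by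
  induction n with
  | zero => intro f hf _; exact ⟨f, hf, by simp⟩
  | succ n ih =>
    intro f hf ho
    have hfa : f a = 0 := by
      have : analyticOrderAt f a ≠ 0 := by
        intro h; rw [h] at ho; simp at ho
      exact apply_eq_zero_of_analyticOrderAt_ne_zero this
    have hd : Differentiable ℂ (dslope f a) := by
      rw [← differentiableOn_univ] at hf ⊢
      exact (Complex.differentiableOn_dslope (by simp)).2 hf
    have hfe : f = (fun z => (z - a)) * dslope f a := by
      ext z
      have := sub_smul_dslope f a z
      simp only [smul_eq_mul, hfa, sub_zero] at this
      simp [this]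
    have h1 : analyticOrderAt (fun z : ℂ => z - a) a = 1 := by
      have : AnalyticAt ℂ (fun z : ℂ => z - a) a := by fun_prop
      rw [show (1 : ℕ∞) = ((1 : ℕ) : ℕ∞) from rfl, this.analyticOrderAt_eq_natCast]
      exact ⟨fun _ => 1, by fun_prop, by simp, by simp⟩
    have h2 : analyticOrderAt f a = 1 + analyticOrderAt (dslope f a) a := by
      conv_lhs => rw [hfe]
      rw [analyticOrderAt_mul (by fun_prop) (hd.analyticAt a), h1]
    have h3 : (n : ℕ∞) ≤ analyticOrderAt (dslope f a) a := by
      rw [h2] at ho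
      push_cast at ho
      rw [add_comm] at ho
      exact (ENat.add_le_add_iff_left ENat.one_ne_top).1 ho
    obtain ⟨g, hg, hgz⟩ := ih _ hd h3
    refine ⟨g, hg, fun z => ?_⟩
    conv_lhs => rw [hfe]
    simp only [Pi.mul_apply, hgz]
    ring

theorem entire_div_prod (T : ℕ) (f : ℂ → ℂ) (hf : Differentiable ℂ f) (S : ℕ)
    (h : ∀ k < S, (T : ℕ∞) ≤ analyticOrderAt f (k : ℂ)) :
    ∃ g : ℂ → ℂ, Differentiable ℂ g ∧ ∀ z, f z = (∏ k ∈ Finset.range S, (z - k) ^ T) * g z := by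
  induction S with
  | zero => exact ⟨f, hf, by simp⟩
  | succ S ih =>
    obtain ⟨g, hg, hfg⟩ := ih (fun k hk => h k (by omega))
    have hP : AnalyticAt ℂ (fun z : ℂ => ∏ k ∈ Finset.range S, (z - k) ^ T) (S : ℂ) := by
      have : Differentiable ℂ (fun z : ℂ => ∏ k ∈ Finset.range S, (z - k) ^ T) := by fun_prop
      exact this.analyticAt _
    have hP0 : analyticOrderAt (fun z : ℂ => ∏ k ∈ Finset.range S, (z - k) ^ T) (S : ℂ) = 0 := by
      rw [hP.analyticOrderAt_eq_zero, Finset.prod_ne_zero_iff]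
      intro k hk
      apply pow_ne_zero
      rw [sub_ne_zero]
      have := Finset.mem_range.1 hk
      exact_mod_cast (by omega : S ≠ k)
    have hfe : f = (fun z : ℂ => ∏ k ∈ Finset.range S, (z - k) ^ T) * g := by
      ext z; simp [hfg]
    have ho := h S (by omega)
    rw [hfe, analyticOrderAt_mul hP (hg.analyticAt _), hP0, zero_add] at ho
    obtain ⟨g', hg', hgg⟩ := entire_div_pow T _ g hg ho
    refine ⟨g', hg', fun z => ?_⟩
    rw [hfg, hgg, Finset.prod_range_succ]; ring

/-- Schwarz lemma. -/
theorem schwarz_zeros (T S S' : ℕ) (f : ℂ → ℂ) (hf : Differentiable ℂ f) (hS' : 0 < S')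
    (hSS : S ≤ S')
    (h : ∀ k < S, ∀ t < T, iteratedDeriv t f (k : ℂ) = 0) (B : ℝ)
    (hB : ∀ z : ℂ, ‖z‖ ≤ 3 * S' → ‖f z‖ ≤ B) (k : ℕ) (hk : k < S') :
    ‖f k‖ ≤ B * (1 / 2) ^ (S * T) := by
  obtain ⟨g, hg, hfg⟩ := entire_div_prod T f hf S (fun k hk => by
    rw [natCast_le_analyticOrderAt_iff_iteratedDeriv_eq_zero (hf.analyticAt _)]
    exact h k hk)
  have hS'r : (0 : ℝ) < S' := by exact_mod_cast hS'
  have hB0 : 0 ≤ B := (norm_nonneg _).trans (hB 0 (by simp))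
  have hgb : ‖g k‖ ≤ B / (2 * S') ^ (S * T) := by
    refine Complex.norm_le_of_forall_mem_frontier_norm_le (U := Metric.ball 0 (3 * S'))
      Metric.isBounded_ball hg.diffContOnCl ?_ ?_
    · intro z hz
      rw [frontier_ball _ (by positivity)] at hz
      have hz' : ‖z‖ = 3 * S' := by simpa using hz
      rw [le_div_iff₀ (by positivity)]
      have h1 := hB z hz'.le
      rw [hfg, norm_mul, mul_comm] at h1
      refine le_trans ?_ h1
      gcongr
      rw [norm_prod, pow_mul', ← Finset.card_range S, ← Finset.prod_const, Finset.card_range]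
      apply Finset.prod_le_prod
      · intros; positivity
      · intro i hi
        rw [norm_pow]
        gcongr
        have := norm_sub_norm_le z (i : ℂ)
        rw [hz'] at this
        simp only [Complex.norm_natCast] at this
        have hi' : (i : ℝ) ≤ S' := by
          have := Finset.mem_range.1 hi
          exact_mod_cast (by omega : i ≤ S')
        linarith
    · apply subset_closure
      simp only [Metric.mem_ball, dist_zero_right, Complex.norm_natCast]
      have : (k : ℝ) < S' := by exact_mod_cast hk
      linarith
  have hp : ‖∏ i ∈ Finset.range S, ((k : ℂ) - i) ^ T‖ ≤ (S' : ℝ) ^ (S * T) := by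
    rw [norm_prod, pow_mul', ← Finset.card_range S, ← Finset.prod_const, Finset.card_range]
    apply Finset.prod_le_prod
    · intros; positivity
    · intro i hi
      rw [norm_pow]
      gcongr
      have hi' := Finset.mem_range.1 hi
      have e : ((k : ℂ) - i) = (((k : ℝ) - (i : ℝ) : ℝ) : ℂ) := by push_cast; rfl
      rw [e, Complex.norm_real, Real.norm_eq_abs, abs_le]
      have h1 : (i : ℝ) ≤ S' := by exact_mod_cast (by omega : i ≤ S')
      have h2 : (k : ℝ) ≤ S' := by exact_mod_cast hk.le
      have h3 : (0 : ℝ) ≤ i := by positivity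
      have h4 : (0 : ℝ) ≤ k := by positivity
      constructor <;> linarith
  rw [hfg, norm_mul]
  calc _ ≤ (S' : ℝ) ^ (S * T) * (B / (2 * S') ^ (S * T)) := by gcongr
    _ = _ := by rw [mul_pow, div_pow, one_pow]; field_simp

open Polynomial in
/-- An exponential polynomial of order at most `M` vanishing at `0, …, M-1` is trivial. -/
theorem exp_poly_vanish {F ι : Type*} [Field F] [CharZero F] [DecidableEq ι] (s : Finset ι)
    (w : ι → F) (hw : ∀ i ∈ s, ∀ j ∈ s, w i = w j → i = j) (hw0 : ∀ i ∈ s, w i ≠ 0) (M : ℕ) :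
    ∀ (d : ι → ℕ) (P : ι → F[X]), (∀ i ∈ s, (P i).degree < d i) → (∑ i ∈ s, d i = M) →
    (∀ k < M, ∑ i ∈ s, (P i).eval (k : F) * w i ^ k = 0) → ∀ i ∈ s, P i = 0 := by
  induction M with
  | zero =>
    intro d P hd hs _ i hi
    have : d i = 0 := by
      rw [Finset.sum_eq_zero_iff] at hs
      exact hs i hi
    have h := hd i hi
    rw [this] at h
    by_contra hne
    have := zero_le_degree_iff.2 hne
    exact absurd h (not_lt.2 (by exact_mod_cast this))
  | succ M ih =>
    intro d P hd hs hk
    obtain ⟨i₀, hi₀, hdi⟩ : ∃ i ∈ s, d i ≠ 0 := by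
      by_contra! hcon
      rw [Finset.sum_eq_zero hcon] at hs
      omega
    set P' : ι → F[X] := fun j => C (w j) * taylor 1 (P j) - C (w i₀) * P j with hP'
    have hdeg : ∀ j ∈ s, (P' j).degree < (Function.update d i₀ (d i₀ - 1)) j := by
      intro j hj
      by_cases hji : j = i₀
      · subst hji
        simp only [Function.update_self]
        have e : P' j = C (w j) * (taylor 1 (P j) - P j) := by simp only [hP']; ring
        rw [e, degree_C_mul (hw0 j hj)]
        by_cases hP0 : P j = 0
        · rw [hP0]; simp
        have h1 : (taylor 1 (P j) - P j).degree < (taylor 1 (P j)).degree :=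
          degree_sub_lt_left (by simp) (by
            intro h; apply hP0; rwa [taylor_eq_zero] at h) (by simp)
        rw [degree_taylor] at h1
        have h2 := hd j hj
        have h3 : (P j).degree ≤ ((d j - 1 : ℕ) : WithBot ℕ) := by
          rw [degree_eq_natDegree hP0] at h2 ⊢
          have : (P j).natDegree < d j := by exact_mod_cast h2
          exact_mod_cast (by omega)
        exact h1.trans_le h3
      · rw [Function.update_of_ne hji]
        refine (degree_sub_le _ _).trans_lt ?_
        rw [max_lt_iff]
        constructor
        · rw [degree_C_mul (hw0 j hj), degree_taylor]; exact hd j hj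
        · rw [degree_C_mul (hw0 i₀ hi₀)]; exact hd j hj
    have hsum : ∑ j ∈ s, (Function.update d i₀ (d i₀ - 1)) j = M := by
      rw [Finset.sum_update_of_mem hi₀]
      rw [← Finset.add_sum_erase s d hi₀] at hs
      rw [Finset.sdiff_singleton_eq_erase]
      omega
    have hz := ih _ P' hdeg hsum (by
      intro k hkM
      have h1 := hk (k + 1) (by omega)
      have h2 := hk k (by omega)
      have : ∑ i ∈ s, (P' i).eval (k : F) * w i ^ k =
          ∑ i ∈ s, (P i).eval ((k + 1 : ℕ) : F) * w i ^ (k + 1)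
            - w i₀ * ∑ i ∈ s, (P i).eval (k : F) * w i ^ k := by
        rw [Finset.mul_sum, ← Finset.sum_sub_distrib]
        apply Finset.sum_congr rfl
        intro i _
        simp only [hP', eval_sub, eval_mul, eval_C, taylor_eval]
        push_cast
        ring
      rw [this, h1, h2]; simp)
    have hne : ∀ j ∈ s, j ≠ i₀ → P j = 0 := by
      intro j hj hji
      by_contra hP0
      have h1 := hz j hj
      have h2 : (P' j).coeff (P j).natDegree = (w j - w i₀) * (P j).leadingCoeff := by
        simp only [hP', coeff_sub, coeff_C_mul]
        have : (taylor 1 (P j)).coeff (P j).natDegree = (P j).leadingCoeff := by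
          have := leadingCoeff_taylor (1 : F) (P j)
          rw [leadingCoeff, natDegree_taylor] at this
          exact this
        rw [this, coeff_natDegree]; ring
      rw [h1, coeff_zero] at h2
      have h3 := mul_eq_zero.1 h2.symm
      rcases h3 with h3 | h3
      · exact hji (hw j hj i₀ hi₀ (sub_eq_zero.1 h3))
      · exact hP0 (leadingCoeff_eq_zero.1 h3)
    have hall : ∀ k : ℕ, (P i₀).eval (k : F) = 0 := by
      intro k
      induction k with
      | zero =>
        have := hk 0 (by omega)
        rw [Finset.sum_eq_single i₀ (fun j hj hji => by simp [hne j hj hji])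
          (fun h => absurd hi₀ h)] at this
        simpa using this
      | succ k ihk =>
        have h1 := congrArg (eval (k : F)) (hz i₀ hi₀)
        simp only [hP', eval_sub, eval_mul, eval_C, taylor_eval, ihk, eval_zero, mul_zero,
          sub_zero] at h1
        have h2 := (mul_eq_zero.1 h1).resolve_left (hw0 i₀ hi₀)
        push_cast
        rwa [add_comm] at h2 ⊢
    have hi0 : P i₀ = 0 := by
      apply eq_zero_of_infinite_isRoot
      apply Set.infinite_of_injective_forall_mem (f := fun k : ℕ => (k : F)) Nat.cast_injective
      intro k
      exact hall k
    intro i hi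
    by_cases h : i = i₀
    · rw [h, hi0]
    · exact hne i hi h

/-- `QQ z c m l` is `exp (-c z)` times the `m`-th derivative of `z ^ l * exp (c z)`. -/
def QQ {R : Type*} [CommRing R] (z c : R) : ℕ → ℕ → R
  | 0, l => z ^ l
  | m + 1, l => l * QQ z c m (l - 1) + c * QQ z c m l

theorem QQ_map {R R' : Type*} [CommRing R] [CommRing R'] (f : R →+* R') (z c : R) (m : ℕ) :
    ∀ l, f (QQ z c m l) = QQ (f z) (f c) m l := by
  induction m with
  | zero => intro l; simp [QQ]
  | succ m ih => intro l; simp [QQ, ih]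

theorem QQ_bound (z c : ℂ) (X : ℝ) (hX : 1 ≤ X) (hz : ‖z‖ ≤ X) (Y : ℝ) (m : ℕ) :
    ∀ l : ℕ, l + ‖c‖ ≤ Y → ‖QQ z c m l‖ ≤ Y ^ m * X ^ l := by
  induction m with
  | zero => intro l hl; simp only [QQ, norm_pow, pow_zero, one_mul]; gcongr
  | succ m ih =>
    intro l hl
    have h1 := ih l hl
    have h2 : ‖QQ z c m (l - 1)‖ ≤ Y ^ m * X ^ l := by
      have hY : 0 ≤ Y := le_trans (by positivity) hl
      have := ih (l - 1) (le_trans (by gcongr; omega) hl)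
      refine this.trans ?_
      gcongr
      omega
    have h0 : 0 ≤ Y ^ m * X ^ l := (norm_nonneg _).trans h1
    simp only [QQ]
    calc _ ≤ ‖(l : ℂ) * QQ z c m (l - 1)‖ + ‖c * QQ z c m l‖ := norm_add_le _ _
      _ = l * ‖QQ z c m (l - 1)‖ + ‖c‖ * ‖QQ z c m l‖ := by simp
      _ ≤ l * (Y ^ m * X ^ l) + ‖c‖ * (Y ^ m * X ^ l) := by gcongr
      _ = (l + ‖c‖) * (Y ^ m * X ^ l) := by ring
      _ ≤ Y * (Y ^ m * X ^ l) := by gcongr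
      _ = _ := by ring

theorem QQ_integral {K : Type*} [Field K] (k D : ℕ) (c : K) (hc : IsIntegral ℤ (D * c)) (m : ℕ) :
    ∀ l, IsIntegral ℤ ((D : K) ^ m * QQ (k : K) c m l) := by
  have hN : ∀ n : ℕ, IsIntegral ℤ (n : K) := fun n => by
    simpa using (isIntegral_algebraMap (R := ℤ) (A := K) (x := (n : ℤ)))
  induction m with
  | zero => intro l; simpa [QQ] using (hN k).pow l
  | succ m ih =>
    intro l
    have e : (D : K) ^ (m + 1) * QQ (k : K) c (m + 1) l =
      (D : K) * l * (D ^ m * QQ (k : K) c m (l - 1)) + (D * c) * (D ^ m * QQ (k : K) c m l) := by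
      simp only [QQ]; ring
    rw [e]
    exact (((hN D).mul (hN l)).mul (ih _)).add (hc.mul (ih _))

theorem QQ_hasDerivAt (c : ℂ) (m : ℕ) : ∀ (l : ℕ) (z : ℂ),
    HasDerivAt (fun z => QQ z c m l) (l * QQ z c m (l - 1)) z := by
  induction m with
  | zero => intro l z; simpa [QQ] using hasDerivAt_pow l z
  | succ m ih =>
    intro l z
    have h := ((ih (l - 1) z).const_mul (l : ℂ)).add ((ih l z).const_mul c)
    refine h.congr_deriv ?_
    simp only [QQ]
    ring

section Baker

set_option linter.unusedSectionVars false

variable {K : Type*} [Field K] [NumberField K]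

open Classical in
theorem siegel_const (K : Type*) [Field K] [NumberField K] : ∃ c : ℝ, 0 ≤ c ∧
    ∀ (α β : Type) [Fintype α] [Fintype β] [DecidableEq α] [DecidableEq β]
      (a : Matrix α β (NumberField.RingOfIntegers K)) (p : ℕ) (A : ℝ), a ≠ 0 → 0 < p →
      Fintype.card α = p → Fintype.card β = 2 * p →
      (∀ k l, NumberField.house (a k l : K) ≤ A) →
      ∃ ξ : β → NumberField.RingOfIntegers K, ξ ≠ 0 ∧ a.mulVec ξ = 0 ∧
        ∀ l, NumberField.house (ξ l : K) ≤ c * (2 * p) * A := by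
  have key : ∃ c : ℝ,
      ∀ (α β : Type) [Fintype α] [Fintype β] [DecidableEq α] [DecidableEq β]
      (a : Matrix α β (NumberField.RingOfIntegers K)) (p : ℕ) (A : ℝ), a ≠ 0 → 0 < p →
      Fintype.card α = p → Fintype.card β = 2 * p →
      (∀ k l, NumberField.house (a k l : K) ≤ A) →
      ∃ ξ : β → NumberField.RingOfIntegers K, ξ ≠ 0 ∧ a.mulVec ξ = 0 ∧
        ∀ l, NumberField.house (ξ l : K) ≤
          c * ((c * ((2 * p : ℕ) : ℝ) * A) ^ ((p : ℝ) / (((2 * p : ℕ) : ℝ) - p))) :=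
    ⟨_, fun α β _ _ _ _ a p A ha hp hα hβ hA =>
      NumberField.house.exists_ne_zero_int_vec_house_le K a ha hp
      (show p < 2 * p by omega) (cardα := hα) (cardβ := hβ) (habs := hA)⟩
  obtain ⟨c, hc⟩ := key
  refine ⟨c * c, mul_self_nonneg _, ?_⟩
  intro α β _ _ _ _ a p A ha hp hα hβ hA
  obtain ⟨ξ, h1, h2, h3⟩ := hc α β a p A ha hp hα hβ hA
  refine ⟨ξ, h1, h2, fun l => (h3 l).trans (le_of_eq ?_)⟩
  have : ((p : ℝ) / (((2 * p : ℕ) : ℝ) - p)) = 1 := by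
    have : (p : ℝ) ≠ 0 := by positivity
    push_cast
    field_simp
    ring
  rw [this, Real.rpow_one]
  push_cast
  ring

theorem liouville_house (ξ : K) (hint : IsIntegral ℤ ξ) (h0 : ξ ≠ 0) (φ : K →+* ℂ) (H : ℝ)
    (hH : ∀ σ : K →+* ℂ, ‖σ ξ‖ ≤ H) :
    1 ≤ ‖φ ξ‖ * H ^ (Module.finrank ℚ K - 1) := by
  have hH0 : 0 ≤ H := (norm_nonneg _).trans (hH φ)
  have h1 : NumberField.house ξ ≤ H := by
    rw [NumberField.house, pi_norm_le_iff_of_nonneg hH0]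
    intro σ
    exact hH σ
  have h2 := NumberField.norm_norm_le_norm_mul_house_pow ξ φ
  have h3 : (1 : ℝ) ≤ ‖Algebra.norm ℚ ξ‖ := by
    have hi : IsIntegral ℤ (Algebra.norm ℚ ξ) := Algebra.isIntegral_norm ℚ hint
    obtain ⟨y, hy⟩ := IsIntegrallyClosed.isIntegral_iff.1 hi
    have hne : Algebra.norm ℚ ξ ≠ 0 := Algebra.norm_ne_zero_iff.2 h0
    rw [← hy] at hne ⊢
    have hy0 : y ≠ 0 := by rintro rfl; simp at hne
    have : (1 : ℤ) ≤ |y| := Int.one_le_abs hy0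
    simp only [algebraMap_int_eq, eq_intCast, Int.norm_cast_rat]
    rw [Int.norm_eq_abs]
    exact_mod_cast this
  refine h3.trans (h2.trans ?_)
  have := NumberField.house_nonneg ξ
  gcongr

/-- The coefficient of the auxiliary form. -/
noncomputable def cf (A1 A2 B0 B1 : K) (m0 m1 k : ℕ) (v : ℕ × ℕ × ℕ) : K :=
  QQ (k : K) (v.2.2 * B0) m0 v.1 * (v.2.1 + v.2.2 * B1) ^ m1 * (A1 ^ (v.2.1 * k) * A2 ^ (v.2.2 * k))

/-- The index set. -/
abbrev Ix (n : ℕ) := Fin (648 * n ^ 8) × Fin (n ^ 6) × Fin (n ^ 6)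

/-- Underlying natural numbers of an index. -/
def Ix.nat {n : ℕ} (v : Ix n) : ℕ × ℕ × ℕ := (v.1, v.2.1, v.2.2)

/-- The auxiliary function. -/
noncomputable def GG {n : ℕ} (q : Ix n → ℂ) (b0 b1 l1 l2 : ℂ) (m0 m1 : ℕ) (z : ℂ) : ℂ :=
  ∑ v : Ix n, q v * (QQ z (v.nat.2.2 * b0) m0 v.nat.1 * (v.nat.2.1 + v.nat.2.2 * b1) ^ m1 *
    Complex.exp ((v.nat.2.1 * l1 + v.nat.2.2 * l2) * z))

theorem GG_hasDerivAt {n : ℕ} (q : Ix n → ℂ) (b0 b1 l1 l2 : ℂ) (hl : l2 = b0 + b1 * l1)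
    (m0 m1 : ℕ) (z : ℂ) :
    HasDerivAt (GG q b0 b1 l1 l2 m0 m1)
      (GG q b0 b1 l1 l2 (m0 + 1) m1 z + l1 * GG q b0 b1 l1 l2 m0 (m1 + 1) z) z := by
  have : ∀ v ∈ (Finset.univ : Finset (Ix n)), HasDerivAt
      (fun z => q v * (QQ z (v.nat.2.2 * b0) m0 v.nat.1 * (v.nat.2.1 + v.nat.2.2 * b1) ^ m1 *
        Complex.exp ((v.nat.2.1 * l1 + v.nat.2.2 * l2) * z)))
      (q v * (QQ z (v.nat.2.2 * b0) (m0 + 1) v.nat.1 * (v.nat.2.1 + v.nat.2.2 * b1) ^ m1 *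
        Complex.exp ((v.nat.2.1 * l1 + v.nat.2.2 * l2) * z)) +
       l1 * (q v * (QQ z (v.nat.2.2 * b0) m0 v.nat.1 * (v.nat.2.1 + v.nat.2.2 * b1) ^ (m1 + 1) *
        Complex.exp ((v.nat.2.1 * l1 + v.nat.2.2 * l2) * z)))) z := by
    intro v _
    have h1 := QQ_hasDerivAt (v.nat.2.2 * b0) m0 v.nat.1 z
    have h2 : HasDerivAt (fun z : ℂ => Complex.exp ((v.nat.2.1 * l1 + v.nat.2.2 * l2) * z))
        (Complex.exp ((v.nat.2.1 * l1 + v.nat.2.2 * l2) * z) *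
          ((v.nat.2.1 * l1 + v.nat.2.2 * l2) * 1)) z :=
      ((hasDerivAt_id z).const_mul _).cexp
    have h3 := (((h1.mul_const ((v.nat.2.1 + v.nat.2.2 * b1) ^ m1)).mul h2).const_mul (q v))
    refine h3.congr_deriv ?_
    simp only [QQ]
    rw [hl]
    ring
  have h := HasDerivAt.fun_sum this
  rw [Finset.sum_add_distrib, ← Finset.mul_sum] at h
  exact h

theorem GG_differentiable {n : ℕ} (q : Ix n → ℂ) (b0 b1 l1 l2 : ℂ) (hl : l2 = b0 + b1 * l1)
    (m0 m1 : ℕ) : Differentiable ℂ (GG q b0 b1 l1 l2 m0 m1) :=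
  fun z => (GG_hasDerivAt q b0 b1 l1 l2 hl m0 m1 z).differentiableAt

theorem GG_iteratedDeriv {n : ℕ} (q : Ix n → ℂ) (b0 b1 l1 l2 : ℂ) (hl : l2 = b0 + b1 * l1)
    (z : ℂ) (t : ℕ) : ∀ (m0 m1 : ℕ),
    (∀ i j, i + j ≤ m0 + m1 + t → GG q b0 b1 l1 l2 i j z = 0) →
    iteratedDeriv t (GG q b0 b1 l1 l2 m0 m1) z = 0 := by
  induction t with
  | zero => intro m0 m1 h; simpa using h m0 m1 (by omega)
  | succ t ih =>
    intro m0 m1 h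
    have hd : deriv (GG q b0 b1 l1 l2 m0 m1) =
        (GG q b0 b1 l1 l2 (m0 + 1) m1) + (fun z => l1 * GG q b0 b1 l1 l2 m0 (m1 + 1) z) := by
      ext w
      rw [(GG_hasDerivAt q b0 b1 l1 l2 hl m0 m1 w).deriv]; rfl
    have c1 := (GG_differentiable q b0 b1 l1 l2 hl (m0 + 1) m1).contDiff (n := t)
    have c2 := (GG_differentiable q b0 b1 l1 l2 hl m0 (m1 + 1)).contDiff (n := t)
    rw [iteratedDeriv_succ', hd, iteratedDeriv_add c1.contDiffAt (contDiff_const.mul c2).contDiffAt,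
      iteratedDeriv_const_mul_field,
      ih (m0 + 1) m1 (fun i j hij => h i j (by omega)),
      ih m0 (m1 + 1) (fun i j hij => h i j (by omega))]
    simp

theorem GG_nat {n : ℕ} (φ : K →+* ℂ) (p : Ix n → K) (A1 A2 B0 B1 : K) (l1 l2 : ℂ)
    (h1 : φ A1 = Complex.exp l1) (h2 : φ A2 = Complex.exp l2) (m0 m1 k : ℕ) :
    GG (fun v => φ (p v)) (φ B0) (φ B1) l1 l2 m0 m1 k =
      φ (∑ v, p v * cf A1 A2 B0 B1 m0 m1 k v.nat) := by
  simp only [GG, cf, map_sum, map_mul, map_pow, map_add, map_natCast, QQ_map, h1, h2,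
    ← Complex.exp_nat_mul, ← Complex.exp_add]
  refine Finset.sum_congr rfl fun v _ => ?_
  congr 3
  push_cast
  ring

theorem cf_integral (A1 A2 B0 B1 : K) (D L : ℕ) (hA1 : IsIntegral ℤ (D * A1))
    (hA2 : IsIntegral ℤ (D * A2)) (hB0 : IsIntegral ℤ (D * B0)) (hB1 : IsIntegral ℤ (D * B1))
    (m0 m1 k : ℕ) (v : ℕ × ℕ × ℕ) (hv1 : v.2.1 ≤ L) (hv2 : v.2.2 ≤ L) :
    IsIntegral ℤ ((D : K) ^ (m0 + m1 + 2 * L * k) * cf A1 A2 B0 B1 m0 m1 k v) := by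
  have hN : ∀ n : ℕ, IsIntegral ℤ (n : K) := fun n => by
    simpa using (isIntegral_algebraMap (R := ℤ) (A := K) (x := (n : ℤ)))
  obtain ⟨d1, hd1⟩ := Nat.exists_eq_add_of_le hv1
  obtain ⟨d2, hd2⟩ := Nat.exists_eq_add_of_le hv2
  have e : (D : K) ^ (m0 + m1 + 2 * L * k) * cf A1 A2 B0 B1 m0 m1 k v =
      (D ^ m0 * QQ (k : K) (v.2.2 * B0) m0 v.1) * (D * v.2.1 + v.2.2 * (D * B1)) ^ m1 *
      ((D * A1) ^ (v.2.1 * k) * D ^ (d1 * k) * ((D * A2) ^ (v.2.2 * k) * D ^ (d2 * k))) := by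
    have e1 : m0 + m1 + 2 * L * k =
        m0 + m1 + v.2.1 * k + d1 * k + v.2.2 * k + d2 * k := by
      have : 2 * L * k = L * k + L * k := by ring
      rw [this]
      nth_rewrite 1 [hd1]
      rw [hd2]; ring
    have e2 : ((D : K) * v.2.1 + v.2.2 * (D * B1)) = D * (v.2.1 + v.2.2 * B1) := by ring
    rw [e1, e2]
    simp only [cf, pow_add, mul_pow]
    ring
  rw [e]
  refine ((QQ_integral k D _ ?_ m0 _).mul (IsIntegral.pow ?_ _)).mul
    (((hA1.pow _).mul ((hN D).pow _)).mul ((hA2.pow _).mul ((hN D).pow _)))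
  · have : (D : K) * (v.2.2 * B0) = v.2.2 * (D * B0) := by ring
    rw [this]
    exact (hN _).mul hB0
  · exact ((hN D).mul (hN _)).add ((hN _).mul hB1)

theorem term_bound (n e : ℕ) (hn : 1 ≤ n) (he : 4 ≤ e) (he' : e ≤ 21) (X : ℝ) (hX : 1 ≤ X)
    (b0 b1 z w : ℂ) (hb0 : ‖b0‖ ≤ X) (hb1 : ‖b1‖ ≤ X) (hz : ‖z‖ ≤ 3 * n ^ e)
    (hw : ‖w‖ ≤ Real.exp (6 * X * n ^ (6 + e))) (m0 m1 : ℕ) (hm : m0 + m1 ≤ 36 * n ^ 8)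
    (v : Ix n) :
    ‖QQ z (v.nat.2.2 * b0) m0 v.nat.1 * (v.nat.2.1 + v.nat.2.2 * b1) ^ m1 * w‖ ≤
      Real.exp ((42 * X + 40000) * n ^ (6 + e)) := by
  have hnr : (1 : ℝ) ≤ n := by exact_mod_cast hn
  have hv0 : (v.nat.1 : ℝ) ≤ 648 * n ^ 8 := by exact_mod_cast v.1.2.le
  have hv1 : (v.nat.2.1 : ℝ) ≤ n ^ 6 := by exact_mod_cast v.2.1.2.le
  have hv2 : (v.nat.2.2 : ℝ) ≤ n ^ 6 := by exact_mod_cast v.2.2.2.le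
  have h68 : (n : ℝ) ^ 6 ≤ n ^ 8 := pow_le_pow_right₀ hnr (by norm_num)
  set Y : ℝ := (648 + X) * n ^ 8 with hY
  have hY1 : 1 ≤ Y := by
    have : (1 : ℝ) ≤ n ^ 8 := one_le_pow₀ hnr
    nlinarith
  have hQ := QQ_bound z (v.nat.2.2 * b0) (3 * n ^ e)
    (by have : (1 : ℝ) ≤ n ^ e := one_le_pow₀ hnr
        linarith) hz Y m0 v.nat.1 (by
      rw [norm_mul, Complex.norm_natCast, hY]
      have : (v.nat.2.2 : ℝ) * ‖b0‖ ≤ n ^ 8 * X := by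
        gcongr
        exact hv2.trans h68
      linarith)
  have hL : ‖(v.nat.2.1 + v.nat.2.2 * b1 : ℂ)‖ ≤ Y := by
    refine (norm_add_le _ _).trans ?_
    rw [norm_mul, Complex.norm_natCast, Complex.norm_natCast]
    have : (v.nat.2.2 : ℝ) * ‖b1‖ ≤ n ^ 8 * X := by
      gcongr
      exact hv2.trans h68
    have h8 : (0 : ℝ) ≤ n ^ 8 := by positivity
    rw [hY]; linarith
  have hnexp : (n : ℝ) ≤ Real.exp n := by linarith [Real.add_one_le_exp (n : ℝ)]
  have hY2 : Y ≤ Real.exp ((656 + X) * n) := by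
    have : (648 + X) ≤ Real.exp ((648 + X) * n) := by
      have h := Real.add_one_le_exp ((648 + X) * n)
      nlinarith
    calc Y ≤ Real.exp ((648 + X) * n) * (Real.exp n) ^ 8 := by rw [hY]; gcongr
      _ = _ := by rw [← Real.exp_nat_mul, ← Real.exp_add]; congr 1; push_cast; ring
  have hZ : (3 * n ^ e : ℝ) ≤ Real.exp (24 * n) := by
    have h3 : (3 : ℝ) ≤ Real.exp (3 * n) := by
      have h := Real.add_one_le_exp (3 * n : ℝ)
      linarith
    calc (3 * n ^ e : ℝ) ≤ Real.exp (3 * n) * (Real.exp n) ^ 21 := by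
          gcongr
          exact (pow_le_pow_left₀ (by positivity) hnexp e).trans
            (pow_le_pow_right₀ (Real.one_le_exp (by positivity)) he')
      _ = _ := by rw [← Real.exp_nat_mul, ← Real.exp_add]; congr 1; push_cast; ring
  have h9 : (n : ℝ) ^ 9 ≤ n ^ (6 + e) := pow_le_pow_right₀ hnr (by omega)
  rw [norm_mul, norm_mul, norm_pow]
  calc _ ≤ (Y ^ m0 * (3 * n ^ e) ^ v.nat.1) * Y ^ m1 * Real.exp (6 * X * n ^ (6 + e)) := by gcongr
    _ = Y ^ (m0 + m1) * (3 * n ^ e) ^ v.nat.1 * Real.exp (6 * X * n ^ (6 + e)) := by ring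
    _ ≤ (Real.exp ((656 + X) * n)) ^ (36 * n ^ 8) * (Real.exp (24 * n)) ^ (648 * n ^ 8) *
          Real.exp (6 * X * n ^ (6 + e)) := by
        gcongr
        · exact (pow_le_pow_left₀ (by positivity) hY2 _).trans
            (pow_le_pow_right₀ (Real.one_le_exp (by positivity)) hm)
        · exact (pow_le_pow_left₀ (by positivity) hZ _).trans
            (pow_le_pow_right₀ (Real.one_le_exp (by positivity)) (by exact_mod_cast v.1.2.le))
    _ = Real.exp ((36 * (656 + X) + 24 * 648) * n ^ 9 + 6 * X * n ^ (6 + e)) := by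
        rw [← Real.exp_nat_mul, ← Real.exp_nat_mul, ← Real.exp_add, ← Real.exp_add]
        congr 1; push_cast; ring
    _ ≤ _ := by
        apply Real.exp_le_exp.2
        have : (36 * (656 + X) + 24 * 648) * (n : ℝ) ^ 9 ≤
          (36 * (656 + X) + 24 * 648) * n ^ (6 + e) := by gcongr
        have h0 : (0 : ℝ) ≤ n ^ (6 + e) := by positivity
        nlinarith

theorem cf_bound (n e : ℕ) (hn : 1 ≤ n) (he : 4 ≤ e) (he' : e ≤ 21) (X : ℝ) (hX : 1 ≤ X)
    (σ : K →+* ℂ) (A1 A2 B0 B1 : K) (hA1 : ‖σ A1‖ ≤ X) (hA2 : ‖σ A2‖ ≤ X) (hB0 : ‖σ B0‖ ≤ X)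
    (hB1 : ‖σ B1‖ ≤ X) (m0 m1 k : ℕ) (hm : m0 + m1 ≤ 36 * n ^ 8) (hk : k ≤ n ^ e) (v : Ix n) :
    ‖σ (cf A1 A2 B0 B1 m0 m1 k v.nat)‖ ≤ Real.exp ((42 * X + 40000) * n ^ (6 + e)) := by
  simp only [cf, map_mul, map_pow, map_add, map_natCast, QQ_map]
  have hkr : (k : ℝ) ≤ n ^ e := by exact_mod_cast hk
  refine term_bound n e hn he he' X hX _ _ _ _ hB0 hB1 ?_ ?_ m0 m1 hm v
  · rw [Complex.norm_natCast]
    have : (0 : ℝ) ≤ n ^ e := by positivity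
    linarith
  · have hXe : X ≤ Real.exp X := by linarith [Real.add_one_le_exp X]
    have key : ∀ (A : K) (u : ℕ), ‖σ A‖ ≤ X → u < n ^ 6 → ‖σ A‖ ^ (u * k) ≤
        Real.exp (X * n ^ (6 + e)) := by
      intro A u hA hu
      calc ‖σ A‖ ^ (u * k) ≤ (Real.exp X) ^ (u * k) := by gcongr; exact hA.trans hXe
        _ ≤ (Real.exp X) ^ (n ^ (6 + e)) := by
          apply pow_le_pow_right₀ (Real.one_le_exp (by positivity))
          rw [pow_add]
          exact Nat.mul_le_mul hu.le hk
        _ = _ := by rw [← Real.exp_nat_mul]; congr 1; push_cast; ring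
    rw [norm_mul, norm_pow, norm_pow]
    calc _ ≤ Real.exp (X * n ^ (6 + e)) * Real.exp (X * n ^ (6 + e)) := by
          gcongr
          · exact key A1 _ hA1 v.2.1.2
          · exact key A2 _ hA2 v.2.2.2
      _ ≤ _ := by
          rw [← Real.exp_add]
          apply Real.exp_le_exp.2
          have : (0 : ℝ) ≤ X * n ^ (6 + e) := by positivity
          linarith

theorem GG_bound (n e : ℕ) (hn : 1 ≤ n) (he : 4 ≤ e) (he' : e ≤ 21) (X : ℝ) (hX : 1 ≤ X)
    (b0 b1 l1 l2 : ℂ) (hl1 : ‖l1‖ ≤ X) (hl2 : ‖l2‖ ≤ X) (hb0 : ‖b0‖ ≤ X)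
    (hb1 : ‖b1‖ ≤ X) (m0 m1 : ℕ) (hm : m0 + m1 ≤ 36 * n ^ 8) (q : Ix n → ℂ) (P : ℝ)
    (hq : ∀ v, ‖q v‖ ≤ P) (z : ℂ) (hz : ‖z‖ ≤ 3 * n ^ e) :
    ‖GG q b0 b1 l1 l2 m0 m1 z‖ ≤
      648 * n ^ 20 * (P * Real.exp ((42 * X + 40000) * n ^ (6 + e))) := by
  have hc : ((Finset.univ : Finset (Ix n)).card : ℝ) = 648 * n ^ 20 := by
    simp only [Finset.card_univ, Fintype.card_prod, Fintype.card_fin]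
    push_cast; ring
  rw [GG, ← hc, ← nsmul_eq_mul]
  refine (norm_sum_le _ _).trans (Finset.sum_le_card_nsmul _ _ _ ?_)
  intro v _
  rw [norm_mul]
  have hP : 0 ≤ P := (norm_nonneg _).trans (hq v)
  refine mul_le_mul (hq v) ?_ (norm_nonneg _) hP
  refine term_bound n e hn he he' X hX _ _ _ _ hb0 hb1 hz ?_ m0 m1 hm v
  rw [Complex.norm_exp]
  apply Real.exp_le_exp.2
  refine (Complex.re_le_norm _).trans ?_
  rw [norm_mul]
  have hv1 : (v.nat.2.1 : ℝ) ≤ n ^ 6 := by exact_mod_cast v.2.1.2.le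
  have hv2 : (v.nat.2.2 : ℝ) ≤ n ^ 6 := by exact_mod_cast v.2.2.2.le
  have h1 : ‖(v.nat.2.1 * l1 + v.nat.2.2 * l2 : ℂ)‖ ≤ n ^ 6 * X + n ^ 6 * X := by
    refine (norm_add_le _ _).trans ?_
    rw [norm_mul, norm_mul, Complex.norm_natCast, Complex.norm_natCast]
    gcongr
  calc _ ≤ (n ^ 6 * X + n ^ 6 * X) * (3 * n ^ e) := by gcongr
    _ = _ := by ring

end Baker

section Baker2

variable {K : Type*} [Field K] [NumberField K]

theorem ineq_final (n d e : ℕ) (c3 : ℝ) (hbig : Real.exp (c3 * d) < 2 ^ n) (hn : 1 ≤ n)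
    (hd : 1 ≤ d) (x : ℝ) (hx : x ≤ Real.exp (c3 * n ^ (7 + e)) * (1 / 2) ^ (n ^ e * n ^ 8))
    (h : 1 ≤ x * (Real.exp (c3 * n ^ (7 + e))) ^ (d - 1)) : False := by
  have h1 : 1 ≤ Real.exp (c3 * n ^ (7 + e)) * (1 / 2) ^ (n ^ e * n ^ 8) *
      (Real.exp (c3 * n ^ (7 + e))) ^ (d - 1) := h.trans (by gcongr)
  obtain ⟨d', rfl⟩ := Nat.exists_eq_add_of_le hd
  have h2 : Real.exp (c3 * n ^ (7 + e)) * (1 / 2) ^ (n ^ e * n ^ 8) *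
      (Real.exp (c3 * n ^ (7 + e))) ^ (1 + d' - 1) =
      (Real.exp (c3 * (1 + d' : ℕ)) * (1 / 2) ^ n) ^ (n ^ (7 + e)) := by
    rw [mul_pow, ← pow_mul, Nat.add_sub_cancel_left, ← Real.exp_nat_mul, ← Real.exp_nat_mul,
      mul_right_comm, ← Real.exp_add]
    congr 2
    · push_cast; ring
    · ring
  rw [h2] at h1
  have h3 : Real.exp (c3 * (1 + d' : ℕ)) * (1 / 2) ^ n < 1 := by
    rw [div_pow, one_pow, mul_one_div, div_lt_one (by positivity)]
    exact hbig
  exact absurd h1 (not_le.2 (pow_lt_one₀ (by positivity) h3 (by positivity)))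

/-- The extrapolation step. -/
theorem baker_step (φ : K →+* ℂ) (l1 l2 : ℂ) (A1 A2 B0 B1 : K)
    (h1 : φ A1 = Complex.exp l1) (h2 : φ A2 = Complex.exp l2) (hl : l2 = φ B0 + φ B1 * l1)
    (D : ℕ) (hD : 1 ≤ D) (hA1 : IsIntegral ℤ (D * A1))
    (hA2 : IsIntegral ℤ (D * A2)) (hB0 : IsIntegral ℤ (D * B0)) (hB1 : IsIntegral ℤ (D * B1))
    (X : ℝ) (hX : 1 ≤ X) (hDX : (D : ℝ) ≤ X) (hl1 : ‖l1‖ ≤ X) (hl2 : ‖l2‖ ≤ X)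
    (hXs : ∀ σ : K →+* ℂ, ‖σ A1‖ ≤ X ∧ ‖σ A2‖ ≤ X ∧ ‖σ B0‖ ≤ X ∧ ‖σ B1‖ ≤ X)
    (n : ℕ) (hn : 1 ≤ n) (c3 c4 : ℝ) (hc4 : 0 ≤ c4) (hc3 : c4 + 80 * X + 41000 ≤ c3)
    (hbig : Real.exp (c3 * Module.finrank ℚ K) < 2 ^ n)
    (p : Ix n → K) (hp : ∀ v, IsIntegral ℤ (p v))
    (hpb : ∀ v, ∀ σ : K →+* ℂ, ‖σ (p v)‖ ≤ Real.exp (c4 * n ^ 10))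
    (e T : ℕ) (he : 4 ≤ e) (he' : e ≤ 20) (hT : T + n ^ 8 ≤ 18 * n ^ 8)
    (hv : ∀ m0 m1 k, m0 + m1 < T + n ^ 8 → k < n ^ e →
      ∑ v, p v * cf A1 A2 B0 B1 m0 m1 k v.nat = 0) :
    ∀ m0 m1 k, m0 + m1 < T → k < n ^ (e + 1) →
      ∑ v, p v * cf A1 A2 B0 B1 m0 m1 k v.nat = 0 := by
  intro m0 m1 k hm hk
  by_contra hne
  have hnr : (1 : ℝ) ≤ n := by exact_mod_cast hn
  have hm36 : m0 + m1 ≤ 36 * n ^ 8 := by omega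
  set N : ℕ := m0 + m1 + 2 * n ^ 6 * k with hN
  set ξ : K := (D : K) ^ N * ∑ v, p v * cf A1 A2 B0 B1 m0 m1 k v.nat with hξ
  have hξ0 : ξ ≠ 0 := mul_ne_zero (pow_ne_zero _ (by exact_mod_cast (by omega : D ≠ 0))) hne
  have hξi : IsIntegral ℤ ξ := by
    rw [hξ, Finset.mul_sum]
    refine IsIntegral.sum _ fun v _ => ?_
    rw [mul_left_comm]
    exact (hp v).mul (cf_integral A1 A2 B0 B1 D (n ^ 6) hA1 hA2 hB0 hB1 m0 m1 k v.nat
      v.2.1.2.le v.2.2.2.le)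
  have h810 : (n : ℝ) ^ 8 ≤ n ^ (7 + e) := pow_le_pow_right₀ hnr (by omega)
  have h10 : (n : ℝ) ^ 10 ≤ n ^ (7 + e) := pow_le_pow_right₀ hnr (by omega)
  have hn1 : (n : ℝ) ≤ n ^ (7 + e) := le_self_pow₀ hnr (by omega)
  have hE0 : (0 : ℝ) ≤ n ^ (7 + e) := by positivity
  have hDN : (D : ℝ) ^ N ≤ Real.exp (38 * X * n ^ (7 + e)) := by
    have hXe : X ≤ Real.exp X := by linarith [Real.add_one_le_exp X]
    have hN' : N ≤ 38 * n ^ (7 + e) := by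
      have a1 : n ^ 8 ≤ n ^ (7 + e) := Nat.pow_le_pow_right hn (by omega)
      have a2 : 2 * n ^ 6 * k ≤ 2 * n ^ (7 + e) := by
        have : n ^ (7 + e) = n ^ 6 * n ^ (e + 1) := by ring
        rw [this, mul_assoc]
        gcongr
      omega
    calc (D : ℝ) ^ N ≤ (Real.exp X) ^ N := by gcongr; exact hDX.trans hXe
      _ ≤ (Real.exp X) ^ (38 * n ^ (7 + e)) :=
        pow_le_pow_right₀ (Real.one_le_exp (by positivity)) hN'
      _ = _ := by rw [← Real.exp_nat_mul]; congr 1; push_cast; ring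
  have hq : (648 * n ^ 20 : ℝ) ≤ Real.exp (668 * n) := by
    have hnexp : (n : ℝ) ≤ Real.exp n := by linarith [Real.add_one_le_exp (n : ℝ)]
    have h3 : (648 : ℝ) ≤ Real.exp (648 * n) := by
      have h := Real.add_one_le_exp (648 * n : ℝ)
      linarith
    calc (648 * n ^ 20 : ℝ) ≤ Real.exp (648 * n) * (Real.exp n) ^ 20 := by gcongr
      _ = _ := by rw [← Real.exp_nat_mul, ← Real.exp_add]; congr 1; push_cast; ring
  have e7 : 6 + (e + 1) = 7 + e := by ring
  have htot : Real.exp (38 * X * n ^ (7 + e)) * (648 * n ^ 20 * (Real.exp (c4 * n ^ 10) *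
      Real.exp ((42 * X + 40000) * n ^ (6 + (e + 1))))) ≤ Real.exp (c3 * n ^ (7 + e)) := by
    rw [e7]
    calc _ ≤ Real.exp (38 * X * n ^ (7 + e)) * (Real.exp (668 * n) * (Real.exp (c4 * n ^ 10) *
          Real.exp ((42 * X + 40000) * n ^ (7 + e)))) := by gcongr
      _ ≤ _ := by
        rw [← Real.exp_add, ← Real.exp_add, ← Real.exp_add]
        apply Real.exp_le_exp.2
        have a1 : c4 * (n : ℝ) ^ 10 ≤ c4 * n ^ (7 + e) := by gcongr
        have a2 : (c4 + 80 * X + 41000) * (n : ℝ) ^ (7 + e) ≤ c3 * n ^ (7 + e) := by gcongr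
        nlinarith
  have hc : ((Finset.univ : Finset (Ix n)).card : ℝ) = 648 * n ^ 20 := by
    simp only [Finset.card_univ, Fintype.card_prod, Fintype.card_fin]
    push_cast; ring
  have hH : ∀ σ : K →+* ℂ, ‖σ ξ‖ ≤ Real.exp (c3 * n ^ (7 + e)) := by
    intro σ
    refine le_trans ?_ htot
    rw [hξ, map_mul, norm_mul, map_pow, map_natCast, norm_pow, Complex.norm_natCast]
    gcongr
    rw [map_sum, ← hc, ← nsmul_eq_mul]
    refine (norm_sum_le _ _).trans (Finset.sum_le_card_nsmul _ _ _ ?_)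
    intro v _
    rw [map_mul, norm_mul]
    obtain ⟨s1, s2, s3, s4⟩ := hXs σ
    exact mul_le_mul (hpb v σ) (cf_bound n (e + 1) hn (by omega) (by omega) X hX σ A1 A2 B0 B1
      s1 s2 s3 s4 m0 m1 k hm36 hk.le v) (norm_nonneg _) (Real.exp_pos _).le
  have hG : ‖φ ξ‖ ≤ Real.exp (c3 * n ^ (7 + e)) * (1 / 2) ^ (n ^ e * n ^ 8) := by
    obtain ⟨s1, s2, s3, s4⟩ := hXs φ
    have hS := schwarz_zeros (n ^ 8) (n ^ e) (n ^ (e + 1))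
      (GG (fun v => φ (p v)) (φ B0) (φ B1) l1 l2 m0 m1)
      (GG_differentiable _ _ _ _ _ hl _ _) (by positivity)
      (Nat.pow_le_pow_right hn (by omega)) (by
        intro k' hk' t ht
        apply GG_iteratedDeriv _ _ _ _ _ hl
        intro i j hij
        rw [GG_nat φ p A1 A2 B0 B1 l1 l2 h1 h2, hv i j k' (by omega) hk', map_zero]) _ (by
        intro z hz
        exact GG_bound n (e + 1) hn (by omega) (by omega) X hX _ _ _ _ hl1 hl2 s3 s4 m0 m1 hm36
          _ (Real.exp (c4 * n ^ 10)) (fun v => hpb v φ) z (by exact_mod_cast hz)) k hk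
    rw [GG_nat φ p A1 A2 B0 B1 l1 l2 h1 h2] at hS
    rw [hξ, map_mul, norm_mul, map_pow, map_natCast, norm_pow, Complex.norm_natCast]
    refine le_trans ?_ (mul_le_mul_of_nonneg_right htot (by positivity))
    rw [mul_assoc]
    gcongr
  exact ineq_final n (Module.finrank ℚ K) e c3 hbig hn Module.finrank_pos _ hG
    (liouville_house ξ hξi hξ0 φ _ hH)

theorem baker_two (φ : K →+* ℂ) (l1 l2 : ℂ) (A1 A2 B0 B1 : K)
    (h1 : φ A1 = Complex.exp l1) (h2 : φ A2 = Complex.exp l2) (hl : l2 = φ B0 + φ B1 * l1)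
    (hind : ∀ i j i' j' : ℕ, A1 ^ i * A2 ^ j = A1 ^ i' * A2 ^ j' → i = i' ∧ j = j') : False := by
  -- common denominator
  obtain ⟨D, hD, hA1, hA2, hB0, hB1⟩ : ∃ D : ℕ, 1 ≤ D ∧ IsIntegral ℤ (D * A1) ∧
      IsIntegral ℤ (D * A2) ∧ IsIntegral ℤ (D * B0) ∧ IsIntegral ℤ (D * B1) := by
    have key : ∀ a : K, ∃ D : ℕ, 1 ≤ D ∧ IsIntegral ℤ (D * a) := by
      intro a
      have ha : IsAlgebraic ℤ a :=
        (IsFractionRing.isAlgebraic_iff ℤ ℚ K).2 (Algebra.IsAlgebraic.isAlgebraic a)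
      obtain ⟨y, hy0, hy⟩ := ha.exists_integral_multiple
      refine ⟨y.natAbs, Int.natAbs_pos.2 hy0, ?_⟩
      rw [zsmul_eq_mul] at hy
      rcases Int.natAbs_eq y with h | h
      · have e : (y : K) = ((y.natAbs : ℕ) : K) := by
          conv_lhs => rw [h]
          rw [Int.cast_natCast]
        rwa [e] at hy
      · have e : (y : K) = -((y.natAbs : ℕ) : K) := by
          conv_lhs => rw [h]
          rw [Int.cast_neg, Int.cast_natCast]
        rw [e] at hy
        have := hy.neg
        rwa [neg_mul, neg_neg] at this
    have hN : ∀ n : ℕ, IsIntegral ℤ (n : K) := fun n => by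
      simpa using (isIntegral_algebraMap (R := ℤ) (A := K) (x := (n : ℤ)))
    obtain ⟨d1, p1, i1⟩ := key A1
    obtain ⟨d2, p2, i2⟩ := key A2
    obtain ⟨d3, p3, i3⟩ := key B0
    obtain ⟨d4, p4, i4⟩ := key B1
    refine ⟨d1 * d2 * d3 * d4, by
      have := Nat.mul_pos (Nat.mul_pos (Nat.mul_pos p1 p2) p3) p4
      omega, ?_, ?_, ?_, ?_⟩
    · have e : ((d1 * d2 * d3 * d4 : ℕ) : K) * A1 = ((d2 * d3 * d4 : ℕ) : K) * (d1 * A1) := by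
        push_cast; ring
      rw [e]
      exact (hN _).mul i1
    · have e : ((d1 * d2 * d3 * d4 : ℕ) : K) * A2 = ((d1 * d3 * d4 : ℕ) : K) * (d2 * A2) := by
        push_cast; ring
      rw [e]
      exact (hN _).mul i2
    · have e : ((d1 * d2 * d3 * d4 : ℕ) : K) * B0 = ((d1 * d2 * d4 : ℕ) : K) * (d3 * B0) := by
        push_cast; ring
      rw [e]
      exact (hN _).mul i3
    · have e : ((d1 * d2 * d3 * d4 : ℕ) : K) * B1 = ((d1 * d2 * d3 : ℕ) : K) * (d4 * B1) := by
        push_cast; ring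
      rw [e]
      exact (hN _).mul i4
  obtain ⟨c, hc0, hsieg⟩ := siegel_const K
  obtain ⟨X, hX, hDX, hcX, hl1, hl2, hXs⟩ : ∃ X : ℝ, 1 ≤ X ∧ (D : ℝ) ≤ X ∧ c ≤ X ∧ ‖l1‖ ≤ X ∧
      ‖l2‖ ≤ X ∧ ∀ σ : K →+* ℂ, ‖σ A1‖ ≤ X ∧ ‖σ A2‖ ≤ X ∧ ‖σ B0‖ ≤ X ∧ ‖σ B1‖ ≤ X := by
    refine ⟨1 + D + c + ‖l1‖ + ‖l2‖ + NumberField.house A1 + NumberField.house A2 +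
      NumberField.house B0 + NumberField.house B1, ?_⟩
    have a1 := NumberField.house_nonneg A1
    have a2 := NumberField.house_nonneg A2
    have a3 := NumberField.house_nonneg B0
    have a4 := NumberField.house_nonneg B1
    have a5 : (0 : ℝ) ≤ D := by positivity
    have a6 := norm_nonneg l1
    have a7 := norm_nonneg l2
    refine ⟨by linarith, by linarith, by linarith, by linarith, by linarith, fun σ => ?_⟩
    have b1 := NumberField.norm_embedding_le_house A1 σ
    have b2 := NumberField.norm_embedding_le_house A2 σ
    have b3 := NumberField.norm_embedding_le_house B0 σ
    have b4 := NumberField.norm_embedding_le_house B1 σ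
    refine ⟨by linarith, by linarith, by linarith, by linarith⟩
  set c4 : ℝ := 81 * X + 41000 with hc4
  set c3 : ℝ := c4 + 80 * X + 41000 with hc3
  obtain ⟨n, hn648, hbig⟩ : ∃ n : ℕ, 648 ≤ n ∧ Real.exp (c3 * Module.finrank ℚ K) < 2 ^ n := by
    obtain ⟨n, hn⟩ := pow_unbounded_of_one_lt (Real.exp (c3 * Module.finrank ℚ K))
      (by norm_num : (1 : ℝ) < 2)
    exact ⟨n + 648, by omega, hn.trans_le (pow_le_pow_right₀ (by norm_num) (by omega))⟩
  have hn : 1 ≤ n := by omega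
  have hnr : (1 : ℝ) ≤ n := by exact_mod_cast hn
  -- Siegel lemma
  obtain ⟨p, hp0, hpi, hpb, hv⟩ : ∃ p : Ix n → K, p ≠ 0 ∧ (∀ v, IsIntegral ℤ (p v)) ∧
      (∀ v, ∀ σ : K →+* ℂ, ‖σ (p v)‖ ≤ Real.exp (c4 * n ^ 10)) ∧
      (∀ m0 m1 k, m0 + m1 < 18 * n ^ 8 → k < n ^ 4 →
        ∑ v, p v * cf A1 A2 B0 B1 m0 m1 k v.nat = 0) := by
    let a : Matrix (Fin (18 * n ^ 8) × Fin (18 * n ^ 8) × Fin (n ^ 4)) (Ix n)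
        (NumberField.RingOfIntegers K) := fun i v =>
      ⟨(D : K) ^ ((i.1 : ℕ) + i.2.1 + 2 * n ^ 6 * i.2.2) * cf A1 A2 B0 B1 i.1 i.2.1 i.2.2 v.nat,
        cf_integral A1 A2 B0 B1 D (n ^ 6) hA1 hA2 hB0 hB1 _ _ _ v.nat v.2.1.2.le v.2.2.2.le⟩
    have ha : ∀ i v, ((a i v : NumberField.RingOfIntegers K) : K) =
      (D : K) ^ ((i.1 : ℕ) + i.2.1 + 2 * n ^ 6 * i.2.2) * cf A1 A2 B0 B1 i.1 i.2.1 i.2.2 v.nat :=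
      fun i v => rfl
    have ha0 : a ≠ 0 := by
      intro h
      have p8 : 0 < n ^ 8 := by positivity
      have hh := congrFun (congrFun h (⟨0, by positivity⟩, ⟨0, by positivity⟩, ⟨0, by positivity⟩))
        (⟨0, by positivity⟩, ⟨0, by positivity⟩, ⟨0, by positivity⟩)
      have h3 := congrArg (fun x : NumberField.RingOfIntegers K => (x : K)) hh
      simp only [ha] at h3
      simp [cf, QQ, Ix.nat] at h3
    obtain ⟨ξ, hξ0, hξ, hξb⟩ := hsieg _ _ a (324 * n ^ 20)
      (Real.exp ((80 * X + 40000) * n ^ 10)) ha0 (by positivity)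
      (by simp only [Fintype.card_prod, Fintype.card_fin]; ring)
      (by simp only [Fintype.card_prod, Fintype.card_fin]; ring) (by
        intro i v
        rw [NumberField.house, pi_norm_le_iff_of_nonneg (Real.exp_pos _).le]
        intro σ
        change ‖σ (a i v : K)‖ ≤ _
        obtain ⟨s1, s2, s3, s4⟩ := hXs σ
        have hm : (i.1 : ℕ) + i.2.1 ≤ 36 * n ^ 8 := by
          have := i.1.2
          have := i.2.1.2
          omega
        have hb := cf_bound n 4 hn le_rfl (by norm_num) X hX σ A1 A2 B0 B1 s1 s2 s3 s4
          i.1 i.2.1 i.2.2 hm i.2.2.2.le v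
        rw [ha, map_mul, norm_mul, map_pow, map_natCast, norm_pow, Complex.norm_natCast]
        have hXe : X ≤ Real.exp X := by linarith [Real.add_one_le_exp X]
        have hN' : (i.1 : ℕ) + i.2.1 + 2 * n ^ 6 * i.2.2 ≤ 38 * n ^ 10 := by
          have a1 : n ^ 8 ≤ n ^ 10 := Nat.pow_le_pow_right hn (by omega)
          have a2 : 2 * n ^ 6 * (i.2.2 : ℕ) ≤ 2 * n ^ 10 := by
            have : n ^ 10 = n ^ 6 * n ^ 4 := by ring
            rw [this, mul_assoc]
            gcongr
            exact i.2.2.2.le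
          omega
        have hDN : (D : ℝ) ^ ((i.1 : ℕ) + i.2.1 + 2 * n ^ 6 * i.2.2) ≤
            Real.exp (38 * X * n ^ 10) := by
          calc (D : ℝ) ^ ((i.1 : ℕ) + i.2.1 + 2 * n ^ 6 * i.2.2) ≤
              (Real.exp X) ^ ((i.1 : ℕ) + i.2.1 + 2 * n ^ 6 * i.2.2) := by
                gcongr; exact hDX.trans hXe
            _ ≤ (Real.exp X) ^ (38 * n ^ 10) :=
              pow_le_pow_right₀ (Real.one_le_exp (by positivity)) hN'
            _ = _ := by rw [← Real.exp_nat_mul]; congr 1; push_cast; ring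
        refine (mul_le_mul hDN hb (norm_nonneg _) (Real.exp_pos _).le).trans (le_of_eq ?_)
        rw [← Real.exp_add]
        congr 1
        ring)
    refine ⟨fun v => (ξ v : K), ?_, fun v => (ξ v).isIntegral_coe, ?_, ?_⟩
    · intro h
      apply hξ0
      ext v
      exact congrFun h v
    · intro v σ
      refine (NumberField.norm_embedding_le_house _ σ).trans ((hξb v).trans ?_)
      have hnexp : (n : ℝ) ≤ Real.exp n := by linarith [Real.add_one_le_exp (n : ℝ)]
      have h3 : (648 : ℝ) ≤ Real.exp (648 * n) := by
        have h := Real.add_one_le_exp (648 * n : ℝ)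
        linarith
      have hq : (648 * n ^ 20 : ℝ) ≤ Real.exp (668 * n) := by
        calc (648 * n ^ 20 : ℝ) ≤ Real.exp (648 * n) * (Real.exp n) ^ 20 := by gcongr
          _ = _ := by rw [← Real.exp_nat_mul, ← Real.exp_add]; congr 1; push_cast; ring
      have hce : c ≤ Real.exp X := by linarith [Real.add_one_le_exp X]
      have e1 : (2 * ((324 * n ^ 20 : ℕ) : ℝ)) = 648 * n ^ 20 := by push_cast; ring
      rw [e1]
      calc _ ≤ Real.exp X * Real.exp (668 * n) * Real.exp ((80 * X + 40000) * n ^ 10) := by gcongr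
        _ ≤ _ := by
          rw [← Real.exp_add, ← Real.exp_add]
          apply Real.exp_le_exp.2
          have a1 : (n : ℝ) ≤ n ^ 10 := le_self_pow₀ hnr (by norm_num)
          have a2 : X ≤ X * n ^ 10 := le_mul_of_one_le_right (by linarith) (one_le_pow₀ hnr)
          rw [hc4]
          nlinarith
    · intro m0 m1 k hm hk
      have h3 := congrFun hξ (⟨m0, by omega⟩, ⟨m1, by omega⟩, ⟨k, hk⟩)
      have h4 := congrArg (fun x : NumberField.RingOfIntegers K => (x : K)) h3
      simp only [Matrix.mulVec, dotProduct, map_sum, map_mul, ha, Pi.zero_apply, map_zero] at h4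
      have hD0 : (D : K) ^ (m0 + m1 + 2 * n ^ 6 * k) ≠ 0 :=
        pow_ne_zero _ (by exact_mod_cast (by omega : D ≠ 0))
      refine (mul_eq_zero.1 (?_ : (D : K) ^ (m0 + m1 + 2 * n ^ 6 * k) *
        ∑ v : Ix n, (ξ v : K) * cf A1 A2 B0 B1 m0 m1 k v.nat = 0)).resolve_left hD0
      rw [← h4, Finset.mul_sum]
      refine Finset.sum_congr rfl fun v _ => ?_
      ring
  -- extrapolation
  have hex : ∀ J ≤ 17, ∀ m0 m1 k, m0 + m1 < (18 - J) * n ^ 8 → k < n ^ (4 + J) →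
      ∑ v, p v * cf A1 A2 B0 B1 m0 m1 k v.nat = 0 := by
    intro J
    induction J with
    | zero => intro _; simpa using hv
    | succ J ih =>
      intro hJ
      have e1 : (18 - J) * n ^ 8 = (18 - (J + 1)) * n ^ 8 + n ^ 8 := by
        rw [show 18 - J = (18 - (J + 1)) + 1 by omega]; ring
      exact baker_step φ l1 l2 A1 A2 B0 B1 h1 h2 hl D hD hA1 hA2 hB0 hB1 X hX hDX hl1 hl2 hXs
        n hn c3 c4 (by positivity) le_rfl hbig p hpi hpb (4 + J) ((18 - (J + 1)) * n ^ 8)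
        (by omega) (by omega) (by rw [← e1]; gcongr; omega) (by
          rw [← e1]; exact ih (by omega))
  have hfin := hex 17 le_rfl 0 0
  -- conclusion
  have hA10 : A1 ≠ 0 := by
    rintro rfl
    rw [map_zero] at h1
    exact Complex.exp_ne_zero _ h1.symm
  have hA20 : A2 ≠ 0 := by
    rintro rfl
    rw [map_zero] at h2
    exact Complex.exp_ne_zero _ h2.symm
  let P : Fin (n ^ 6) × Fin (n ^ 6) → Polynomial K := fun j =>
    ∑ i : Fin (648 * n ^ 8), Polynomial.C (p (i, j)) * Polynomial.X ^ (i : ℕ)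
  have hPz := exp_poly_vanish (Finset.univ : Finset (Fin (n ^ 6) × Fin (n ^ 6)))
    (fun j => A1 ^ (j.1 : ℕ) * A2 ^ (j.2 : ℕ)) (by
      intro i _ j _ hij
      obtain ⟨q1, q2⟩ := hind _ _ _ _ hij
      exact Prod.ext (Fin.ext q1) (Fin.ext q2)) (by
      intro i _
      exact mul_ne_zero (pow_ne_zero _ hA10) (pow_ne_zero _ hA20)) (648 * n ^ 20)
      (fun _ => 648 * n ^ 8) P (by
        intro j _
        refine (Polynomial.degree_sum_fin_lt _)) (by
        simp only [Finset.sum_const, Finset.card_univ, Fintype.card_prod, Fintype.card_fin,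
          smul_eq_mul]
        ring) (by
        intro k hk
        have hk' : k < n ^ (4 + 17) := by
          have : n ^ (4 + 17) = n * n ^ 20 := by ring
          rw [this]
          exact hk.trans_le (Nat.mul_le_mul_right _ hn648)
        have h5 := hfin k (by positivity) hk'
        rw [Fintype.sum_prod_type_right] at h5
        rw [← h5]
        refine Finset.sum_congr rfl fun j _ => ?_
        simp only [P, Polynomial.eval_finsetSum, Polynomial.eval_mul, Polynomial.eval_C,
          Polynomial.eval_pow, Polynomial.eval_X, Finset.sum_mul]
        refine Finset.sum_congr rfl fun i _ => ?_
        simp only [cf, QQ, Ix.nat, pow_zero, mul_one, mul_pow, pow_mul]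
        ring)
  apply hp0
  ext ⟨i, j⟩
  have h6 := hPz j (Finset.mem_univ _)
  have h7 := congrArg (fun q => Polynomial.coeff q (i : ℕ)) h6
  simp only [P, Polynomial.finsetSum_coeff, Polynomial.coeff_C_mul, Polynomial.coeff_X_pow,
    Polynomial.coeff_zero] at h7
  rw [Finset.sum_eq_single i (by
    intro b _ hb
    rw [if_neg (fun h => hb (Fin.ext h.symm)), mul_zero]) (by simp)] at h7
  simpa using h7

end Baker2

theorem baker_complex (l1 l2 b0 b1 : ℂ) (h1 : IsAlgebraic ℚ (Complex.exp l1))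
    (h2 : IsAlgebraic ℚ (Complex.exp l2)) (hb0 : IsAlgebraic ℚ b0) (hb1 : IsAlgebraic ℚ b1)
    (hl : l2 = b0 + b1 * l1)
    (hind : ∀ i j i' j' : ℕ, Complex.exp l1 ^ i * Complex.exp l2 ^ j =
      Complex.exp l1 ^ i' * Complex.exp l2 ^ j' → i = i' ∧ j = j') : False := by
  let S : Set ℂ := {Complex.exp l1, Complex.exp l2, b0, b1}
  let K := IntermediateField.adjoin ℚ S
  have hfin : FiniteDimensional ℚ K := by
    have : Finite S := by
      apply Set.Finite.to_subtype
      simp [S]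
    apply IntermediateField.finiteDimensional_adjoin
    rintro x hx
    simp only [S, Set.mem_insert_iff, Set.mem_singleton_iff] at hx
    rcases hx with rfl | rfl | rfl | rfl
    · exact h1.isIntegral
    · exact h2.isIntegral
    · exact hb0.isIntegral
    · exact hb1.isIntegral
  have : NumberField K := { to_charZero := inferInstance, to_finiteDimensional := hfin }
  have hm : ∀ x ∈ S, x ∈ K := fun x hx => IntermediateField.subset_adjoin ℚ S hx
  refine baker_two (K := K) (algebraMap K ℂ) l1 l2 ⟨Complex.exp l1, hm _ (by simp [S])⟩
    ⟨Complex.exp l2, hm _ (by simp [S])⟩ ⟨b0, hm _ (by simp [S])⟩ ⟨b1, hm _ (by simp [S])⟩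
    rfl rfl hl ?_
  intro i j i' j' h
  apply hind
  have := congrArg (fun x : K => (x : ℂ)) h
  simpa using this

theorem isAlg_sqrt (y : ℝ) (hy : IsAlgebraic ℚ y) : IsAlgebraic ℚ (Real.sqrt y) := by
  by_cases h : 0 ≤ y
  · have h2 : IsIntegral ℚ ((Real.sqrt y) ^ 2) := by
      rw [Real.sq_sqrt h]; exact hy.isIntegral
    exact (h2.of_pow (by norm_num)).isAlgebraic
  · rw [Real.sqrt_eq_zero_of_nonpos (not_le.1 h).le]
    exact isAlgebraic_zero

theorem not_root_of_unity (s : ℝ) (hs : s = Real.sqrt 5) (w w' : ℂ) (hw : w + w' = s - 2)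
    (hww : w * w' = 1) (r r' : ℝ) (hr : r + r' = s + 2) (hrr : r * r' = 1) (hr0 : 0 < r)
    (hr1 : r < 1) (m : ℕ) (hm : m ≠ 0) : w ^ m ≠ 1 := by
  have hs2 : s * s = 5 := by rw [hs]; exact Real.mul_self_sqrt (by norm_num)
  have hsC : (s : ℂ) * s = 5 := by exact_mod_cast hs2
  have key : ∀ n : ℕ, ∃ a b a' b' : ℤ, w ^ n + w' ^ n = a + b * s ∧
      w ^ (n + 1) + w' ^ (n + 1) = a' + b' * s ∧
      (-r) ^ n + (-r') ^ n = a - b * s ∧ (-r) ^ (n + 1) + (-r') ^ (n + 1) = a' - b' * s := by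
    intro n
    induction n with
    | zero =>
      refine ⟨2, 0, -2, 1, ?_, ?_, ?_, ?_⟩
      · norm_num
      · push_cast; linear_combination hw
      · norm_num
      · push_cast; linear_combination -hr
    | succ n ih =>
      obtain ⟨a, b, a', b', e1, e2, e3, e4⟩ := ih
      refine ⟨a', b', 5 * b' - 2 * a' - a, a' - 2 * b' - b, e2, ?_, e4, ?_⟩
      · have : w ^ (n + 1 + 1) + w' ^ (n + 1 + 1) =
          (w + w') * (w ^ (n + 1) + w' ^ (n + 1)) - (w * w') * (w ^ n + w' ^ n) := by ring
        rw [this, hw, hww, e1, e2]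
        push_cast
        linear_combination (b' : ℂ) * hsC
      · have : (-r) ^ (n + 1 + 1) + (-r') ^ (n + 1 + 1) =
          -(r + r') * ((-r) ^ (n + 1) + (-r') ^ (n + 1)) - (r * r') * ((-r) ^ n + (-r') ^ n) := by
          ring
        rw [this, hr, hrr, e3, e4]
        push_cast
        linear_combination (b' : ℝ) * hs2
  intro hwm
  obtain ⟨a, b, -, -, e1, -, e3, -⟩ := key m
  have hw'm : w' ^ m = 1 := by
    have : (w * w') ^ m = 1 := by rw [hww, one_pow]
    rwa [mul_pow, hwm, one_mul] at this
  rw [hwm, hw'm] at e1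
  have e1r : (1 + 1 : ℝ) = a + b * s := by exact_mod_cast e1
  have hirr : Irrational s := by
    rw [hs]; exact_mod_cast (Nat.prime_five).irrational_sqrt
  have hb : b = 0 := by
    by_contra hb
    apply hirr
    have hbr : (b : ℝ) ≠ 0 := by exact_mod_cast hb
    refine ⟨((2 - a : ℤ) : ℚ) / (b : ℚ), ?_⟩
    push_cast
    rw [div_eq_iff hbr]
    linear_combination e1r
  rw [hb] at e1r e3
  have e5 : (-r) ^ m + (-r') ^ m = 2 := by
    rw [e3]; push_cast at e1r ⊢; linarith
  have e6 : (-r) ^ m * (-r') ^ m = 1 := by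
    rw [← mul_pow, neg_mul_neg, hrr, one_pow]
  have e7 : (-r) ^ m = 1 := by
    have e8 : ((-r) ^ m - 1) ^ 2 = 0 := by
      have : (-r') ^ m = 2 - (-r) ^ m := by linarith
      rw [this] at e6
      linear_combination -e6
    have := pow_eq_zero_iff (two_ne_zero) |>.1 e8
    linarith
  have e9 : r ^ m = 1 := by
    have := congrArg abs e7
    rwa [abs_pow, abs_neg, abs_of_pos hr0, abs_one] at this
  exact absurd e9 (pow_lt_one₀ hr0.le hr1 hm).ne

/-- **Transcendence of the error sum for `(log ρ)/√5`.**
The number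
`(√(124√5−265) log(1 + √5/2 − √(4√5+5)/2) − √(124√5+265) arccos(√5/2 − 1))/(55√11) + 1/11`
is transcendental over `ℚ`. -/
theorem transcendental_error_sum_log_golden_ratio :
    Transcendental ℚ
      ((Real.sqrt (124 * Real.sqrt 5 - 265) *
            Real.log (1 + Real.sqrt 5 / 2 - Real.sqrt (4 * Real.sqrt 5 + 5) / 2)
          - Real.sqrt (124 * Real.sqrt 5 + 265) * Real.arccos (Real.sqrt 5 / 2 - 1)) /
          (55 * Real.sqrt 11)
        + 1 / 11) := by
  intro hx
  have hs0 : 0 ≤ Real.sqrt 5 := Real.sqrt_nonneg 5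
  have hs2 : Real.sqrt 5 * Real.sqrt 5 = 5 := Real.mul_self_sqrt (by norm_num)
  have hq : ∀ q : ℚ, IsAlgebraic ℚ (q : ℝ) := fun q => by
    simpa using isAlgebraic_algebraMap (R := ℚ) (A := ℝ) q
  have hN : ∀ n : ℕ, IsAlgebraic ℚ (n : ℝ) := fun n => isAlgebraic_natCast n
  have as : IsAlgebraic ℚ (Real.sqrt 5) := isAlg_sqrt 5 (by exact_mod_cast hN 5)
  set s := Real.sqrt 5 with hs
  have hs1 : 2 < s := by nlinarith
  have hs3 : s < 3 := by nlinarith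
  have a124 : IsAlgebraic ℚ (124 * s) := (by exact_mod_cast hN 124 : IsAlgebraic ℚ (124 : ℝ)).mul as
  have a265 : IsAlgebraic ℚ (265 : ℝ) := by exact_mod_cast hN 265
  have ac : IsAlgebraic ℚ (Real.sqrt (124 * s - 265)) := isAlg_sqrt _ (a124.sub a265)
  have ad : IsAlgebraic ℚ (Real.sqrt (124 * s + 265)) := isAlg_sqrt _ (a124.add a265)
  have hd0 : Real.sqrt (124 * s + 265) ≠ 0 := (Real.sqrt_pos.2 (by linarith)).ne'
  set c := Real.sqrt (124 * s - 265)
  set d := Real.sqrt (124 * s + 265)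
  have a11 : IsAlgebraic ℚ (55 * Real.sqrt 11) :=
    (by exact_mod_cast hN 55 : IsAlgebraic ℚ (55 : ℝ)).mul
      (isAlg_sqrt 11 (by exact_mod_cast hN 11))
  have h110 : 55 * Real.sqrt 11 ≠ 0 := by positivity
  set g := 55 * Real.sqrt 11
  have a5 : IsAlgebraic ℚ (4 * s + 5) :=
    ((by exact_mod_cast hN 4 : IsAlgebraic ℚ (4 : ℝ)).mul as).add (by exact_mod_cast hN 5)
  have at' : IsAlgebraic ℚ (Real.sqrt (4 * s + 5)) := isAlg_sqrt _ a5
  have ht2 : Real.sqrt (4 * s + 5) * Real.sqrt (4 * s + 5) = 4 * s + 5 :=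
    Real.mul_self_sqrt (by linarith)
  have ht0 : 0 ≤ Real.sqrt (4 * s + 5) := Real.sqrt_nonneg _
  set t := Real.sqrt (4 * s + 5)
  have a2 : IsAlgebraic ℚ (2 : ℝ) := by exact_mod_cast hN 2
  have as2 : IsAlgebraic ℚ (s / 2) := by rw [div_eq_mul_inv]; exact as.mul a2.inv
  have at2 : IsAlgebraic ℚ (t / 2) := by rw [div_eq_mul_inv]; exact at'.mul a2.inv
  have ar : IsAlgebraic ℚ (1 + s / 2 - t / 2) := (isAlgebraic_one.add as2).sub at2
  have hr0 : 0 < 1 + s / 2 - t / 2 := by nlinarith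
  have hr1 : 1 + s / 2 - t / 2 < 1 := by nlinarith
  have hrr : (1 + s / 2 - t / 2) * (1 + s / 2 + t / 2) = 1 := by nlinarith
  have hrs : (1 + s / 2 - t / 2) + (1 + s / 2 + t / 2) = s + 2 := by ring
  set r := 1 + s / 2 - t / 2
  have hcos : Real.cos (Real.arccos (s / 2 - 1)) = s / 2 - 1 :=
    Real.cos_arccos (by linarith) (by linarith)
  have hsin : Real.sin (Real.arccos (s / 2 - 1)) = Real.sqrt (1 - (s / 2 - 1) ^ 2) :=
    Real.sin_arccos _
  have acos : IsAlgebraic ℚ (s / 2 - 1) := as2.sub isAlgebraic_one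
  have asin : IsAlgebraic ℚ (Real.sqrt (1 - (s / 2 - 1) ^ 2)) :=
    isAlg_sqrt _ (isAlgebraic_one.sub (acos.pow 2))
  set th := Real.arccos (s / 2 - 1)
  have toC : ∀ y : ℝ, IsAlgebraic ℚ y → IsAlgebraic ℚ (y : ℂ) := fun y hy => by
    have := hy.algebraMap (A := ℂ)
    simpa using this
  have aI : IsAlgebraic ℚ Complex.I := by
    have h2 : IsIntegral ℚ (Complex.I ^ 2) := by
      rw [Complex.I_sq]; exact isIntegral_one.neg
    exact (h2.of_pow (by norm_num)).isAlgebraic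
  have he1 : Complex.exp ((Real.log r : ℝ) : ℂ) = (r : ℂ) := by
    rw [← Complex.ofReal_exp, Real.exp_log hr0]
  have he2 : Complex.exp ((th : ℂ) * Complex.I) =
      ((s / 2 - 1 : ℝ) : ℂ) + ((Real.sqrt (1 - (s / 2 - 1) ^ 2) : ℝ) : ℂ) * Complex.I := by
    rw [Complex.exp_mul_I, ← Complex.ofReal_cos, ← Complex.ofReal_sin, hcos, hsin]
  have hnorm : ‖Complex.exp ((th : ℂ) * Complex.I)‖ = 1 := Complex.norm_exp_ofReal_mul_I th
  have hunity : ∀ m : ℕ, m ≠ 0 → Complex.exp ((th : ℂ) * Complex.I) ^ m ≠ 1 := by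
    intro m hm
    refine not_root_of_unity s hs _ (Complex.exp (-((th : ℂ) * Complex.I))) ?_ ?_ r _ hrs hrr
      hr0 hr1 m hm
    · have : Complex.exp ((th : ℂ) * Complex.I) + Complex.exp (-((th : ℂ) * Complex.I)) =
          2 * Complex.cos th := by
        rw [Complex.cos, neg_mul]; ring
      rw [this, ← Complex.ofReal_cos, hcos]
      push_cast; ring
    · rw [← Complex.exp_add, add_neg_cancel, Complex.exp_zero]
  set x := (c * Real.log r - d * th) / g + 1 / 11 with hxdef
  have hth : th = -((x - 1 / 11) * g / d) + c / d * Real.log r := by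
    have : x - 1 / 11 = (c * Real.log r - d * th) / g := by rw [hxdef]; ring
    rw [this]
    field_simp
    ring
  have ab0 : IsAlgebraic ℚ (-((x - 1 / 11) * g / d)) := by
    have : IsAlgebraic ℚ (1 / 11 : ℝ) := by
      have := hq (1 / 11)
      push_cast at this
      exact this
    rw [div_eq_mul_inv _ d]
    exact (((hx.sub this).mul a11).mul ad.inv).neg
  have ab1 : IsAlgebraic ℚ (c / d) := by rw [div_eq_mul_inv]; exact ac.mul ad.inv
  refine baker_complex ((Real.log r : ℝ) : ℂ) ((th : ℂ) * Complex.I)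
    (((-((x - 1 / 11) * g / d) : ℝ) : ℂ) * Complex.I) (((c / d : ℝ) : ℂ) * Complex.I)
    ?_ ?_ ((toC _ ab0).mul aI) ((toC _ ab1).mul aI) ?_ ?_
  · rw [he1]; exact toC _ ar
  · rw [he2]; exact (toC _ acos).add ((toC _ asin).mul aI)
  · have hthC := congrArg (fun y : ℝ => (y : ℂ)) hth
    rw [hthC, Complex.ofReal_add, Complex.ofReal_mul (c / d)]
    ring
  · intro i j i' j' h
    have hi : i = i' := by
      have h3 := congrArg norm h
      rw [norm_mul, norm_mul, norm_pow, norm_pow, norm_pow, norm_pow, hnorm, one_pow, one_pow,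
        mul_one, mul_one, he1, Complex.norm_real, Real.norm_of_nonneg hr0.le] at h3
      exact pow_right_injective₀ hr0 hr1.ne h3
    refine ⟨hi, ?_⟩
    rw [hi] at h
    have h4 := mul_left_cancel₀ (pow_ne_zero _ (Complex.exp_ne_zero _)) h
    rcases lt_trichotomy j j' with hj | hj | hj
    · exfalso
      obtain ⟨m, rfl⟩ := Nat.exists_eq_add_of_lt hj
      rw [add_assoc, pow_add] at h4
      exact hunity (m + 1) (by omega)
        (mul_left_cancel₀ (pow_ne_zero j (Complex.exp_ne_zero _)) (by rw [← h4, mul_one]))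
    · exact hj
    · exfalso
      obtain ⟨m, rfl⟩ := Nat.exists_eq_add_of_lt hj
      rw [add_assoc, pow_add] at h4
      exact hunity (m + 1) (by omega)
        (mul_left_cancel₀ (pow_ne_zero j' (Complex.exp_ne_zero _)) (by rw [h4, mul_one]))
end

section
/- For every real number t and every integer n ≥ 1, the sequence B_n(t) satisfies the linear three-term recurrence (n+1)·B_{n+1}(t) − (2n+1)(2+t)·B_n(t) + n·t²·B_{n−1}(t) = 0. -/
open Finset

/-- `Bₙ(t) = ∑_{k=0}^n C(n,k) C(n+k,k) t^{n−k}`. -/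
noncomputable def Blog (t : ℝ) (n : ℕ) : ℝ :=
  ∑ k ∈ range (n + 1), (Nat.choose n k : ℝ) * (Nat.choose (n + k) k : ℝ) * t ^ (n - k)

theorem aux_fact (k r : ℕ) : (Nat.choose (k + r) k : ℝ) * (Nat.choose (k + r + k) k : ℝ)
    = ((k + r + k).factorial : ℝ) / ((k.factorial : ℝ) ^ 2 * (r.factorial : ℝ)) := by
  have h1 := Nat.add_choose_mul_factorial_mul_factorial k r
  have h2 := Nat.add_choose_mul_factorial_mul_factorial (k + r) k
  rw [← Nat.choose_symm_add] at h1
  have h1' : (Nat.choose (k + r) k : ℝ) * k.factorial * r.factorial = (k + r).factorial := by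
    exact_mod_cast h1
  have h2' : (Nat.choose (k + r + k) k : ℝ) * (k + r).factorial * k.factorial
      = (k + r + k).factorial := by exact_mod_cast h2
  have := Nat.factorial_pos k
  have := Nat.factorial_pos r
  rw [eq_div_iff (by positivity), ← h2', ← h1']
  ring

theorem aux_coef (m j : ℕ) (hj : j ≤ m + 1) :
    ((m : ℝ) + 2) * ((Nat.choose (m + 2) (j + 1) : ℝ) * (Nat.choose (m + 2 + (j + 1)) (j + 1) : ℝ))
    - (2 * (m : ℝ) + 3) * (2 * ((Nat.choose (m + 1) j : ℝ) * (Nat.choose (m + 1 + j) j : ℝ))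
      + (Nat.choose (m + 1) (j + 1) : ℝ) * (Nat.choose (m + 1 + (j + 1)) (j + 1) : ℝ))
    + ((m : ℝ) + 1) * ((Nat.choose m (j + 1) : ℝ) * (Nat.choose (m + (j + 1)) (j + 1) : ℝ)) = 0 := by
  obtain ⟨r, hr⟩ := Nat.exists_eq_add_of_le hj
  have hm : (m : ℝ) = j + r - 1 := by
    have : (m : ℝ) + 1 = j + r := by exact_mod_cast hr
    linarith
  have hA : (Nat.choose (m + 2) (j + 1) : ℝ) * (Nat.choose (m + 2 + (j + 1)) (j + 1) : ℝ)
      = (m + j + 3) * (m + j + 2) *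
        (((m + j + 1).factorial : ℝ) / (((j + 1).factorial : ℝ) ^ 2 * (r.factorial : ℝ))) := by
    have h := aux_fact (j + 1) r
    rw [show j + 1 + r = m + 2 by omega] at h
    rw [h, show m + 2 + (j + 1) = m + j + 1 + 1 + 1 by ring, Nat.factorial_succ (m + j + 1 + 1),
      Nat.factorial_succ (m + j + 1)]
    push_cast
    ring
  have hB : (Nat.choose (m + 1) j : ℝ) * (Nat.choose (m + 1 + j) j : ℝ)
      = (j + 1) ^ 2 *
        (((m + j + 1).factorial : ℝ) / (((j + 1).factorial : ℝ) ^ 2 * (r.factorial : ℝ))) := by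
    have h := aux_fact j r
    rw [show j + r = m + 1 by omega] at h
    rw [h, show m + 1 + j = m + j + 1 by ring, Nat.factorial_succ j]
    have := Nat.factorial_pos j
    have := Nat.factorial_pos r
    push_cast
    field_simp
  have hC : (Nat.choose (m + 1) (j + 1) : ℝ) * (Nat.choose (m + 1 + (j + 1)) (j + 1) : ℝ)
      = (m + j + 2) * r *
        (((m + j + 1).factorial : ℝ) / (((j + 1).factorial : ℝ) ^ 2 * (r.factorial : ℝ))) := by
    rcases r with _ | r
    · rw [Nat.choose_eq_zero_of_lt (by omega)]
      simp
    · have h := aux_fact (j + 1) r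
      rw [show j + 1 + r = m + 1 by omega] at h
      rw [h, show m + 1 + (j + 1) = m + j + 1 + 1 by ring, Nat.factorial_succ (m + j + 1),
        Nat.factorial_succ r]
      have := Nat.factorial_pos (j + 1)
      have := Nat.factorial_pos r
      push_cast
      field_simp
      ring
  have hD : (Nat.choose m (j + 1) : ℝ) * (Nat.choose (m + (j + 1)) (j + 1) : ℝ)
      = r * (r - 1) *
        (((m + j + 1).factorial : ℝ) / (((j + 1).factorial : ℝ) ^ 2 * (r.factorial : ℝ))) := by
    rcases r with _ | _ | r
    · rw [Nat.choose_eq_zero_of_lt (by omega)]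
      simp
    · rw [Nat.choose_eq_zero_of_lt (by omega)]
      simp
    · have h := aux_fact (j + 1) r
      rw [show j + 1 + r = m by omega] at h
      rw [h, show m + (j + 1) = m + j + 1 by ring, Nat.factorial_succ (r + 1),
        Nat.factorial_succ r]
      have := Nat.factorial_pos (j + 1)
      have := Nat.factorial_pos r
      push_cast
      rw [show (r : ℝ) + 1 + 1 - 1 = r + 1 by ring]
      field_simp
  rw [hA, hB, hC, hD, hm]
  ring

/-- **Three-term recurrence for `Bₙ(t)`.**
For every real `t` and every `n ≥ 1`,
`(n+1) B_{n+1}(t) − (2n+1)(2+t) Bₙ(t) + n t² B_{n−1}(t) = 0`. -/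
theorem Blog_recurrence (t : ℝ) (n : ℕ) (hn : 1 ≤ n) :
    ((n : ℝ) + 1) * Blog t (n + 1) - (2 * (n : ℝ) + 1) * (2 + t) * Blog t n
      + (n : ℝ) * t ^ 2 * Blog t (n - 1) = 0 := by
  obtain ⟨m, rfl⟩ : ∃ m, n = m + 1 := ⟨n - 1, by omega⟩
  have e2 : Blog t (m + 2) = ∑ j ∈ range (m + 2), (Nat.choose (m + 2) (j + 1) : ℝ) *
      (Nat.choose (m + 2 + (j + 1)) (j + 1) : ℝ) * t ^ (m + 1 - j) + t ^ (m + 2) := by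
    rw [Blog, sum_range_succ']
    simp
  have e1 : t * Blog t (m + 1) = ∑ j ∈ range (m + 2), (Nat.choose (m + 1) (j + 1) : ℝ) *
      (Nat.choose (m + 1 + (j + 1)) (j + 1) : ℝ) * t ^ (m + 1 - j) + t ^ (m + 2) := by
    rw [Blog, sum_range_succ', sum_range_succ _ (m + 1), mul_add, mul_sum]
    rw [Nat.choose_eq_zero_of_lt (show m + 1 < m + 1 + 1 by omega)]
    have : ∀ j ∈ range (m + 1), t * ((Nat.choose (m + 1) (j + 1) : ℝ) *
      (Nat.choose (m + 1 + (j + 1)) (j + 1) : ℝ) * t ^ (m + 1 - (j + 1))) =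
      (Nat.choose (m + 1) (j + 1) : ℝ) *
      (Nat.choose (m + 1 + (j + 1)) (j + 1) : ℝ) * t ^ (m + 1 - j) := by
      intro j hj
      rw [mem_range] at hj
      rw [show m + 1 - j = m + 1 - (j + 1) + 1 by omega]
      ring
    rw [sum_congr rfl this]
    simp
    ring
  have e0 : t ^ 2 * Blog t m = ∑ j ∈ range (m + 2), (Nat.choose m (j + 1) : ℝ) *
      (Nat.choose (m + (j + 1)) (j + 1) : ℝ) * t ^ (m + 1 - j) + t ^ (m + 2) := by
    rw [Blog, sum_range_succ', sum_range_succ _ (m + 1), sum_range_succ _ m, mul_add, mul_sum]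
    rw [Nat.choose_eq_zero_of_lt (show m < m + 1 + 1 by omega),
      Nat.choose_eq_zero_of_lt (show m < m + 1 by omega)]
    have : ∀ j ∈ range m, t ^ 2 * ((Nat.choose m (j + 1) : ℝ) *
      (Nat.choose (m + (j + 1)) (j + 1) : ℝ) * t ^ (m - (j + 1))) =
      (Nat.choose m (j + 1) : ℝ) *
      (Nat.choose (m + (j + 1)) (j + 1) : ℝ) * t ^ (m + 1 - j) := by
      intro j hj
      rw [mem_range] at hj
      rw [show m + 1 - j = m - (j + 1) + 2 by omega]
      ring
    rw [sum_congr rfl this]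
    simp
    ring
  have key : ∑ j ∈ range (m + 2), (((m : ℝ) + 2) * ((Nat.choose (m + 2) (j + 1) : ℝ) *
        (Nat.choose (m + 2 + (j + 1)) (j + 1) : ℝ))
      - (2 * (m : ℝ) + 3) * (2 * ((Nat.choose (m + 1) j : ℝ) * (Nat.choose (m + 1 + j) j : ℝ))
        + (Nat.choose (m + 1) (j + 1) : ℝ) * (Nat.choose (m + 1 + (j + 1)) (j + 1) : ℝ))
      + ((m : ℝ) + 1) * ((Nat.choose m (j + 1) : ℝ) *
        (Nat.choose (m + (j + 1)) (j + 1) : ℝ))) * t ^ (m + 1 - j) = 0 := by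
    refine sum_eq_zero fun j hj => ?_
    rw [mem_range] at hj
    rw [aux_coef m j (by omega), zero_mul]
  simp only [sub_mul, add_mul, mul_add, sum_add_distrib, sum_sub_distrib, mul_assoc,
    ← mul_sum] at key
  have eB : Blog t (m + 1) = ∑ j ∈ range (m + 2), (Nat.choose (m + 1) j : ℝ) *
      (Nat.choose (m + 1 + j) j : ℝ) * t ^ (m + 1 - j) := rfl
  simp only [mul_assoc] at e2 e1 e0 eB
  rw [Nat.add_sub_cancel, show m + 1 + 1 = m + 2 from rfl]
  push_cast
  linear_combination key + ((m : ℝ) + 2) * e2 - (2 * (m : ℝ) + 3) * e1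
    + ((m : ℝ) + 1) * e0 - (2 * (m : ℝ) + 3) * 2 * eB
end

section
/- For every real number t and every integer n ≥ 1, the sequence A_n(t) satisfies the linear three-term recurrence (n+1)·A_{n+1}(t) − (2n+1)(2+t)·A_n(t) + n·t²·A_{n−1}(t) = 0. -/
open Finset

/-- `cₖ(t) = ∑_{m=1}^k (−1)^{m−1} t^m/m`. -/
noncomputable def clog (t : ℝ) (k : ℕ) : ℝ :=
  ∑ m ∈ Icc 1 k, (-1 : ℝ) ^ (m - 1) * t ^ m / m

/-- `Aₙ(t) = ∑_{k=0}^n C(n,k) C(n+k,k) t^{n−k} cₖ(t)`. -/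
noncomputable def Alog (t : ℝ) (n : ℕ) : ℝ :=
  ∑ k ∈ range (n + 1),
    (Nat.choose n k : ℝ) * (Nat.choose (n + k) k : ℝ) * t ^ (n - k) * clog t k

/-- The Legendre-type coefficient `C(n,k) C(n+k,k)`. -/
noncomputable def pco (n k : ℕ) : ℝ := (Nat.choose n k : ℝ) * (Nat.choose (n + k) k : ℝ)

lemma pco_zero {n k : ℕ} (h : n < k) : pco n k = 0 := by
  simp [pco, Nat.choose_eq_zero_of_lt h]

lemma pco_k (n j : ℕ) :
    pco n (j + 1) * ((j : ℝ) + 1) ^ 2 = pco n j * ((n : ℝ) - j) * ((n : ℝ) + j + 1) := by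
  rcases lt_or_ge n j with h | h
  · rw [pco_zero h, pco_zero (by omega)]; ring
  have h1 : (Nat.choose n (j + 1) : ℝ) * ((j : ℝ) + 1) = Nat.choose n j * ((n : ℝ) - j) := by
    have := Nat.choose_succ_right_eq n j
    rw [← Nat.cast_sub h]; exact_mod_cast this
  have h2 : ((n : ℝ) + j + 1) * Nat.choose (n + j) j
      = Nat.choose (n + (j + 1)) (j + 1) * ((j : ℝ) + 1) := by
    have := Nat.add_one_mul_choose_eq (n + j) j
    exact_mod_cast this
  unfold pco
  linear_combination (Nat.choose (n + (j + 1)) (j + 1) * ((j : ℝ) + 1)) * h1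
    - (Nat.choose n j * ((n : ℝ) - j)) * h2

lemma pco_n (n j : ℕ) :
    ((n : ℝ) + 1 - j) * pco (n + 1) j = ((n : ℝ) + 1 + j) * pco n j := by
  rcases lt_or_ge (n + 1) j with h | h
  · rw [pco_zero h, pco_zero (by omega)]; ring
  have h1 : (Nat.choose n j : ℝ) * ((n : ℝ) + 1) = Nat.choose (n + 1) j * ((n : ℝ) + 1 - j) := by
    have := Nat.choose_mul_succ_eq n j
    have e : ((n : ℝ) + 1 - j) = ((n + 1 - j : ℕ) : ℝ) := by
      rw [Nat.cast_sub h]; push_cast; ring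
    rw [e]; exact_mod_cast this
  have h2 : (Nat.choose (n + j) j : ℝ) * ((n : ℝ) + j + 1)
      = Nat.choose (n + 1 + j) j * ((n : ℝ) + 1) := by
    have := Nat.choose_mul_succ_eq (n + j) j
    rw [show n + j + 1 - j = n + 1 by omega, show n + j + 1 = n + 1 + j by omega] at this
    have e : ((n : ℝ) + j + 1) = ((n + 1 + j : ℕ) : ℝ) := by push_cast; ring
    rw [e]; exact_mod_cast this
  unfold pco
  linear_combination (-(Nat.choose (n + 1 + j) j : ℝ)) * h1 - (Nat.choose n j : ℝ) * h2

lemma pco_rec (n j : ℕ) :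
    ((n : ℝ) + 2) * pco (n + 2) (j + 1) - (2 * n + 3) * pco (n + 1) (j + 1)
      + ((n : ℝ) + 1) * pco n (j + 1) = 2 * (2 * n + 3) * pco (n + 1) j := by
  have hj : ((j : ℝ) + 1) ^ 2 ≠ 0 := by positivity
  apply mul_right_cancel₀ hj
  have a := pco_k (n + 2) j
  have b := pco_k (n + 1) j
  have c := pco_k n j
  have d := pco_n n j
  have e := pco_n (n + 1) j
  push_cast at *
  linear_combination ((n : ℝ) + 2) * a - (2 * n + 3) * b + ((n : ℝ) + 1) * c
    - ((n : ℝ) + 1) * (n - j) * d + ((n : ℝ) + 2) * (n + j + 3) * e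

lemma pco_sum (n m : ℕ) : ((n : ℝ) * (n + 1)) *
    ∑ j ∈ range m, (-1 : ℝ) ^ j * pco n j / ((j : ℝ) + 1) = - ((-1) ^ m * pco n m * m) := by
  induction m with
  | zero => simp
  | succ m ih =>
    rw [sum_range_succ, mul_add, ih]
    have hj : ((m : ℝ) + 1) ≠ 0 := by positivity
    have := pco_k n m
    push_cast
    field_simp
    rw [pow_succ]
    linear_combination (-(-1 : ℝ) ^ m) * this

lemma pco_sum_zero (n : ℕ) (hn : 1 ≤ n) :
    ∑ j ∈ range (n + 1), (-1 : ℝ) ^ j * pco n j / ((j : ℝ) + 1) = 0 := by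
  have h := pco_sum n (n + 1)
  rw [pco_zero (Nat.lt_succ_self n)] at h
  have : (n : ℝ) * (n + 1) ≠ 0 := by positivity
  simpa [this] using h

lemma Alog_eq (t : ℝ) (n M : ℕ) (h : n ≤ M) :
    Alog t n = ∑ j ∈ range M, pco n (j + 1) * t ^ (n - (j + 1)) * clog t (j + 1) := by
  have h0 : clog t 0 = 0 := by simp [clog]
  unfold Alog
  rw [sum_range_succ', h0, mul_zero, add_zero]
  apply sum_subset (range_subset_range.2 h)
  intro j _ hj
  have := pco_zero (n := n) (k := j + 1) (by simp at hj; omega)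
  unfold pco at this
  rw [this]; ring

lemma clog_succ (t : ℝ) (j : ℕ) :
    clog t (j + 1) = clog t j + (-1) ^ j * t ^ (j + 1) / ((j : ℝ) + 1) := by
  unfold clog
  rw [sum_Icc_succ_top (by omega)]
  simp

lemma pow_shift (t : ℝ) (n j d : ℕ) :
    t ^ d * (pco n (j + 1) * t ^ (n - (j + 1))) = pco n (j + 1) * t ^ (n + d - (j + 1)) := by
  rcases lt_or_ge n (j + 1) with h | h
  · rw [pco_zero h]; ring
  · rw [show n + d - (j + 1) = d + (n - (j + 1)) by omega, pow_add]; ring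

/-- **Three-term recurrence for `Aₙ(t)`.**
For every real `t` and every `n ≥ 1`,
`(n+1) A_{n+1}(t) − (2n+1)(2+t) Aₙ(t) + n t² A_{n−1}(t) = 0`. -/
theorem Alog_recurrence (t : ℝ) (n : ℕ) (hn : 1 ≤ n) :
    ((n : ℝ) + 1) * Alog t (n + 1) - (2 * (n : ℝ) + 1) * (2 + t) * Alog t n
      + (n : ℝ) * t ^ 2 * Alog t (n - 1) = 0 := by
  obtain ⟨N, rfl⟩ : ∃ N, n = N + 1 := ⟨n - 1, by omega⟩
  have hs := pco_sum_zero (N + 1) hn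
  rw [Nat.add_sub_cancel, Alog_eq t (N + 1 + 1) (N + 2) (by omega),
    Alog_eq t (N + 1) (N + 2) (by omega), Alog_eq t N (N + 2) (by omega),
    mul_sum, mul_sum, mul_sum, ← sum_sub_distrib, ← sum_add_distrib]
  have key : ∀ j ∈ range (N + 2),
      ((N + 1 : ℕ) + 1 : ℝ) * (pco (N + 1 + 1) (j + 1) * t ^ (N + 1 + 1 - (j + 1)) * clog t (j + 1))
      - (2 * ((N + 1 : ℕ) : ℝ) + 1) * (2 + t)
        * (pco (N + 1) (j + 1) * t ^ (N + 1 - (j + 1)) * clog t (j + 1))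
      + ((N + 1 : ℕ) : ℝ) * t ^ 2 * (pco N (j + 1) * t ^ (N - (j + 1)) * clog t (j + 1))
      = 2 * (2 * N + 3) * (t ^ (N + 2) * ((-1 : ℝ) ^ j * pco (N + 1) j / ((j : ℝ) + 1))
        - (pco (N + 1) (j + 1) * t ^ (N + 1 - (j + 1)) * clog t (j + 1)
          - pco (N + 1) j * t ^ (N + 1 - j) * clog t j)) := by
    intro j hj
    have hj' : j ≤ N + 1 := by simp at hj; omega
    have a := pow_shift t (N + 1) j 1
    have b := pow_shift t N j 2
    have r := pco_rec N j
    have e1 : N + 1 + 1 - (j + 1) = N + 1 - j := by omega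
    have e2 : N + 2 - (j + 1) = N + 1 - j := by omega
    rw [e1, Nat.add_sub_add_right] at a
    rw [e2] at b
    rw [e1, Nat.add_sub_add_right]
    have c := clog_succ t j
    have p : t ^ (N + 2) = t ^ (N + 1 - j) * t ^ (j + 1) := by
      rw [← pow_add]; congr 1; omega
    rw [p]
    push_cast
    linear_combination (t ^ (N + 1 - j) * clog t (j + 1)) * r
      - (2 * N + 3) * clog t (j + 1) * a + (N + 1) * clog t (j + 1) * b
      + 2 * (2 * N + 3) * pco (N + 1) j * t ^ (N + 1 - j) * c
  rw [sum_congr rfl key, ← mul_sum, sum_sub_distrib, ← mul_sum, hs,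
    sum_range_sub (fun j => pco (N + 1) j * t ^ (N + 1 - j) * clog t j),
    pco_zero (show N + 1 < N + 2 by omega)]
  simp [clog]
end

section
/- For every integer n ≥ 1, ∑_{k=0}^n C(n,k)·C(n+k,k)·(−1)^k/(k+1) = 0. -/
open Finset

lemma partial_sum_aux (n m : ℕ) :
    -((n : ℝ) * (n + 1)) * ∑ k ∈ range m,
      (Nat.choose n k : ℝ) * (Nat.choose (n + k) k : ℝ) * (-1 : ℝ) ^ k / ((k : ℝ) + 1)
      = m * (Nat.choose n m : ℝ) * (Nat.choose (n + m) m : ℝ) * (-1 : ℝ) ^ m := by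
  induction m with
  | zero => simp
  | succ m ih =>
    have h1 : (Nat.choose n (m + 1) : ℝ) * (m + 1) = Nat.choose n m * ((n : ℝ) - m) := by
      rcases le_or_gt m n with h | h
      · have := Nat.choose_succ_right_eq n m
        rw [← Nat.cast_sub h]
        exact_mod_cast this
      · rw [Nat.choose_eq_zero_of_lt h, Nat.choose_eq_zero_of_lt (by omega)]
        simp
    have h2 : ((n : ℝ) + m + 1) * Nat.choose (n + m) m
        = Nat.choose (n + (m + 1)) (m + 1) * ((m : ℝ) + 1) := by
      exact_mod_cast Nat.add_one_mul_choose_eq (n + m) m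
    have h3 : (m : ℝ) + 1 ≠ 0 := by positivity
    rw [sum_range_succ, mul_add, ih]
    push_cast
    field_simp
    rw [pow_succ]
    linear_combination (-1 : ℝ) ^ m * (Nat.choose (n + (m + 1)) (m + 1) * ((m : ℝ) + 1)) * h1
      - (-1 : ℝ) ^ m * (Nat.choose n m * ((n : ℝ) - m)) * h2

/-- **A vanishing binomial sum (Vandermonde's theorem for `₂F₁(n+1,−n;2;1)`).**
For every integer `n ≥ 1`, `∑_{k=0}^n C(n,k) C(n+k,k) (−1)^k/(k+1) = 0`. -/
theorem binomial_sum_eq_zero (n : ℕ) (hn : 1 ≤ n) :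
    ∑ k ∈ range (n + 1),
      (Nat.choose n k : ℝ) * (Nat.choose (n + k) k : ℝ) * (-1 : ℝ) ^ k / ((k : ℝ) + 1) = 0 := by
  have h := partial_sum_aux n (n + 1)
  rw [Nat.choose_succ_self] at h
  have hn0 : (0 : ℝ) < n := by exact_mod_cast hn
  have hne : -((n : ℝ) * (n + 1)) ≠ 0 := neg_ne_zero.mpr (by positivity)
  refine (mul_eq_zero.mp (h.trans ?_)).resolve_left hne
  simp
end

section
/- Let −1 < t ≤ 1. For every integer n ≥ 0, B_n(t)·log(1+t) − A_n(t) = t^{2n+1}·∫_0^1 x^n·(1−x)^n/(1+tx)^{n+1} dx. -/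
open Finset

lemma aux_pos (t : ℝ) (ht₁ : -1 < t) (x : ℝ) (hx : x ∈ Set.uIcc (0:ℝ) 1) : 0 < 1 + t * x := by
  rw [Set.uIcc_of_le zero_le_one] at hx
  rcases hx.1.eq_or_lt with h | h
  · simp [← h]
  · nlinarith [hx.2, mul_pos h (by linarith : 0 < 1 + t)]

lemma aux_int (t : ℝ) (ht₁ : -1 < t) (f : ℝ → ℝ) (hf : Continuous f) (m : ℕ) :
    IntervalIntegrable (fun x => f x / (1 + t * x) ^ m) MeasureTheory.volume 0 1 := by
  apply ContinuousOn.intervalIntegrable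
  apply ContinuousOn.div hf.continuousOn (by fun_prop)
  intro x hx
  exact pow_ne_zero _ (aux_pos t ht₁ x hx).ne'

lemma aux_parts (t : ℝ) (ht₁ : -1 < t) (Q : Polynomial ℝ) (h0 : Q.eval 0 = 0)
    (h1 : Q.eval 1 = 0) (m : ℕ) :
    ∫ x in (0:ℝ)..1, Q.derivative.eval x / (1 + t * x) ^ (m + 1)
      = t * (m + 1) * ∫ x in (0:ℝ)..1, Q.eval x / (1 + t * x) ^ (m + 2) := by
  have hA := aux_int t ht₁ (fun x => Q.derivative.eval x) (by fun_prop) (m + 1)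
  have hB := (aux_int t ht₁ (fun x => Q.eval x) (by fun_prop) (m + 2)).const_mul (t * (m + 1))
  rw [← intervalIntegral.integral_const_mul, ← sub_eq_zero,
    ← intervalIntegral.integral_sub hA hB]
  rw [intervalIntegral.integral_eq_sub_of_hasDerivAt
    (f := fun x => Q.eval x / (1 + t * x) ^ (m + 1)) ?_ (hA.sub hB)]
  · simp [h0, h1]
  · intro x hx
    have hp := (aux_pos t ht₁ x hx).ne'
    have hd : HasDerivAt (fun x : ℝ => 1 + t * x) t x := by
      simpa using ((hasDerivAt_id x).const_mul t).const_add 1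
    refine ((Q.hasDerivAt x).div (hd.fun_pow (m + 1)) (pow_ne_zero _ hp)).congr_deriv ?_
    push_cast
    field_simp
    ring

open Polynomial in
lemma aux_iter (t : ℝ) (ht₁ : -1 < t) (j : ℕ) : ∀ (Q : Polynomial ℝ),
    (X * (1 - X)) ^ j ∣ Q →
    ∫ x in (0:ℝ)..1, (derivative^[j] Q).eval x / (1 + t * x)
      = t ^ j * (j.factorial : ℝ) * ∫ x in (0:ℝ)..1, Q.eval x / (1 + t * x) ^ (j + 1) := by
  induction j with
  | zero => intro Q _; simp
  | succ j ih =>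
    intro Q hQ
    have hQ' : (X * (1 - X)) ^ j ∣ derivative Q := by
      have := pow_sub_one_dvd_derivative_of_pow_dvd hQ
      rwa [Nat.add_sub_cancel] at this
    rw [Function.iterate_succ_apply, ih _ hQ']
    clear hQ'
    obtain ⟨R, rfl⟩ := hQ
    rw [aux_parts t ht₁ _ (by simp [eval_mul, eval_pow]) (by simp [eval_mul, eval_pow]),
      Nat.factorial_succ]
    push_cast
    ring

lemma aux_log (t : ℝ) (ht₁ : -1 < t) (k : ℕ) :
    Real.log (1 + t) - clog t k
      = (-1) ^ k * t ^ (k + 1) * ∫ x in (0:ℝ)..1, x ^ k / (1 + t * x) := by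
  have hI : ∀ k : ℕ, IntervalIntegrable (fun x : ℝ => x ^ k / (1 + t * x))
      MeasureTheory.volume 0 1 := fun k => by
    simpa using aux_int t ht₁ (fun x => x ^ k) (by fun_prop) 1
  induction k with
  | zero =>
    have h := hI 0
    simp only [clog, pow_zero, zero_add, pow_one, one_mul] at h ⊢
    rw [← intervalIntegral.integral_const_mul]
    rw [intervalIntegral.integral_eq_sub_of_hasDerivAt
      (f := fun x => Real.log (1 + t * x)) ?_ (h.const_mul t)]
    · simp
    · intro x hx
      have hp := (aux_pos t ht₁ x hx).ne'
      have hd : HasDerivAt (fun x : ℝ => 1 + t * x) t x := by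
        simpa using ((hasDerivAt_id x).const_mul t).const_add 1
      exact (hd.log hp).congr_deriv (by ring)
  | succ k ih =>
    have hc : clog t (k + 1) = clog t k + (-1) ^ k * t ^ (k + 1) / (k + 1) := by
      rw [clog, Finset.sum_Icc_succ_top (by omega), clog]
      simp
    have hs : (∫ x in (0:ℝ)..1, x ^ k / (1 + t * x))
        + t * (∫ x in (0:ℝ)..1, x ^ (k + 1) / (1 + t * x)) = 1 / (k + 1) := by
      rw [← intervalIntegral.integral_const_mul,
        ← intervalIntegral.integral_add (hI k) ((hI (k + 1)).const_mul t)]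
      rw [intervalIntegral.integral_congr (g := fun x => x ^ k)]
      · simp
      · intro x hx
        have hp := (aux_pos t ht₁ x hx).ne'
        simp only
        field_simp
        ring
    rw [hc, ← sub_sub, ih]
    linear_combination (-1) ^ k * t ^ (k + 1) * hs

open Polynomial in
lemma aux_leg (n : ℕ) (x : ℝ) :
    (n.factorial : ℝ) * ∑ k ∈ range (n + 1),
      (-1) ^ k * (n.choose k : ℝ) * ((n + k).choose k : ℝ) * x ^ k
      = (derivative^[n] ((X * (1 - X)) ^ n : ℝ[X])).eval x := by
  have h := congrArg (fun p => (p.map (Int.castRingHom ℝ)).eval x)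
    (factorial_mul_shiftedLegendre_eq n)
  simp only [← iterate_derivative_map] at h
  simp only [mul_pow]
  simp only [Polynomial.map_mul, Polynomial.map_pow, Polynomial.map_sub, Polynomial.map_one,
    map_X, Polynomial.map_natCast, eval_mul, eval_natCast] at h
  rw [← h, shiftedLegendre]
  congr 1
  rw [Polynomial.map_sum, eval_finsetSum]
  apply Finset.sum_congr rfl
  intro k _
  rw [Nat.choose_symm_add]
  simp

/-- **Integral representation of the approximation error for `log(1+t)`.**
For `−1 < t ≤ 1` and every `n ≥ 0`,
`Bₙ(t) log(1+t) − Aₙ(t) = t^{2n+1} ∫_0^1 xⁿ(1−x)ⁿ/(1+tx)^{n+1} dx`. -/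
theorem Blog_mul_log_sub_Alog_eq_integral (t : ℝ) (ht₁ : -1 < t) (ht₂ : t ≤ 1) (n : ℕ) :
    Blog t n * Real.log (1 + t) - Alog t n
      = t ^ (2 * n + 1) * ∫ x in (0:ℝ)..1, x ^ n * (1 - x) ^ n / (1 + t * x) ^ (n + 1) := by
  have hI : ∀ k : ℕ, IntervalIntegrable (fun x : ℝ => x ^ k / (1 + t * x))
      MeasureTheory.volume 0 1 := fun k => by
    simpa using aux_int t ht₁ (fun x => x ^ k) (by fun_prop) 1
  have h1 : Blog t n * Real.log (1 + t) - Alog t n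
      = t ^ (n + 1) * ∫ x in (0:ℝ)..1, (∑ k ∈ range (n + 1),
        (-1) ^ k * (n.choose k : ℝ) * ((n + k).choose k : ℝ) * x ^ k) / (1 + t * x) := by
    simp only [Finset.sum_div, mul_div_assoc]
    rw [intervalIntegral.integral_finsetSum (fun k _ => (hI k).const_mul _)]
    rw [Blog, Alog, Finset.sum_mul, ← Finset.sum_sub_distrib, Finset.mul_sum]
    apply Finset.sum_congr rfl
    intro k hk
    rw [intervalIntegral.integral_const_mul, ← mul_sub, aux_log t ht₁ k]
    have : t ^ (n + 1) = t ^ (n - k) * t ^ (k + 1) := by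
      rw [← pow_add]
      congr 1
      have := Finset.mem_range.mp hk
      omega
    rw [this]
    ring
  have hf : (n.factorial : ℝ) ≠ 0 := by positivity
  have h2 := aux_iter t ht₁ n _ (dvd_refl _)
  simp only [← aux_leg, mul_div_assoc] at h2
  rw [intervalIntegral.integral_const_mul] at h2
  rw [h1]
  have h3 := mul_left_cancel₀ hf (h2.trans (by
    rw [mul_comm (t ^ n), mul_assoc]))
  rw [h3]
  simp only [Polynomial.eval_pow, Polynomial.eval_mul, Polynomial.eval_X, Polynomial.eval_sub,
    Polynomial.eval_one, mul_pow]
  ring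
end

section
/- Let −1 < t ≤ 1. Then ∑_{n=0}^∞ (B_n(t)·log(1+t) − A_n(t)) = (2/√(3+2t−t²))·( arctan((1+t)/√(3+2t−t²)) − arctan((1−t)/√(3+2t−t²)) ). In particular, for t = 1 this error sum equals π/4, i.e. ∑_{n=0}^∞ (B_n(1)·log 2 − A_n(1)) = π/4. -/
open Finset Real

lemma one_add_pos {t : ℝ} (h1 : -1 < t) {y : ℝ} (hy : y ∈ Set.Icc (0:ℝ) 1) : 0 < 1 + t * y := by
  obtain ⟨h0, h2⟩ := hy
  rcases le_total 0 t with h | h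
  · positivity
  · nlinarith

lemma cont_div {t : ℝ} (h1 : -1 < t) (f : ℝ → ℝ) (hf : Continuous f) (m : ℕ) :
    ContinuousOn (fun y => f y / (1 + t * y) ^ m) (Set.uIcc (0:ℝ) 1) := by
  rw [Set.uIcc_of_le zero_le_one]
  apply ContinuousOn.div hf.continuousOn (by fun_prop)
  intro y hy
  exact pow_ne_zero _ (one_add_pos h1 hy).ne'

lemma log_sub_clog {t : ℝ} (h1 : -1 < t) (k : ℕ) :
    Real.log (1 + t) - clog t k = (-1) ^ k * t ^ (k + 1) * ∫ y in (0:ℝ)..1, y ^ k / (1 + t * y) := by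
  induction k with
  | zero =>
    have hI := (cont_div h1 (fun _ => t) (by fun_prop) 1).intervalIntegrable (μ := MeasureTheory.volume)
    have := intervalIntegral.integral_eq_sub_of_hasDerivAt
      (f := fun y => Real.log (1 + t * y)) (a := 0) (b := 1)
      (f' := fun y => t / (1 + t * y) ^ 1) (fun y hy => by
        rw [Set.uIcc_of_le zero_le_one] at hy
        have hp := one_add_pos h1 hy
        have h := ((hasDerivAt_id y).const_mul t).const_add 1
        have h' := h.log hp.ne'
        simpa using h') hI
    simp only [pow_one, mul_one, mul_zero, add_zero, Real.log_one, sub_zero] at this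
    have hc : clog t 0 = 0 := by simp [clog]
    rw [hc, sub_zero, ← this, ← intervalIntegral.integral_const_mul]
    congr 1; ext y; ring
  | succ k ih =>
    have hc : clog t (k + 1) = clog t k + (-1) ^ k * t ^ (k + 1) / (k + 1) := by
      unfold clog
      rw [Finset.sum_Icc_succ_top (by omega)]
      simp
    have hI : ∀ k : ℕ, IntervalIntegrable (fun y : ℝ => y ^ k / (1 + t * y)) MeasureTheory.volume 0 1 := by
      intro k
      have := (cont_div h1 (fun y => y ^ k) (by fun_prop) 1).intervalIntegrable (μ := MeasureTheory.volume)
      simpa using this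
    have key : (∫ y in (0:ℝ)..1, y ^ k / (1 + t * y)) + t * ∫ y in (0:ℝ)..1, y ^ (k + 1) / (1 + t * y)
        = 1 / (k + 1) := by
      rw [← intervalIntegral.integral_const_mul, ← intervalIntegral.integral_add (hI k) ((hI (k+1)).const_mul t)]
      have : ∫ y in (0:ℝ)..1, y ^ k = 1 / ((k:ℝ) + 1) := by simp
      rw [← this]
      apply intervalIntegral.integral_congr
      intro y hy
      rw [Set.uIcc_of_le zero_le_one] at hy
      have hp := (one_add_pos h1 hy).ne'
      simp only
      field_simp
      ring
    rw [hc, ← sub_sub, ih]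
    have : (-1) ^ k * t ^ (k + 1) / ((k:ℝ) + 1) = (-1) ^ k * t ^ (k + 1) * (1 / (k + 1)) := by ring
    rw [this, ← key]
    ring

open Polynomial in
lemma parts {t : ℝ} (h1 : -1 < t) (p : ℝ[X]) (j : ℕ) : ∀ m : ℕ,
    (∀ i < j, (derivative^[i] p).eval 0 = 0 ∧ (derivative^[i] p).eval 1 = 0) →
    (m.factorial : ℝ) * ∫ y in (0:ℝ)..1, (derivative^[j] p).eval y / (1 + t * y) ^ (m + 1)
      = t ^ j * (m + j).factorial * ∫ y in (0:ℝ)..1, p.eval y / (1 + t * y) ^ (m + 1 + j) := by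
  induction j with
  | zero => intro m _; simp
  | succ j ih =>
    intro m hv
    have ih' := ih (m + 1) (fun i hi => hv i (by omega))
    obtain ⟨hv0, hv1⟩ := hv j (by omega)
    set q := derivative^[j] p with hq
    have hI1 : IntervalIntegrable (fun y => (derivative q).eval y) MeasureTheory.volume 0 1 :=
      (derivative q).continuous.intervalIntegrable _ _
    have hI2 := (cont_div h1 (fun _ => -((m:ℝ) + 1) * t) (by fun_prop) (m + 2)).intervalIntegrable
      (μ := MeasureTheory.volume)
    have hd : ∀ y ∈ Set.uIcc (0:ℝ) 1, HasDerivAt (fun y : ℝ => ((1 + t * y) ^ (m + 1))⁻¹)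
        (-((m:ℝ) + 1) * t / (1 + t * y) ^ (m + 2)) y := by
      intro y hy
      rw [Set.uIcc_of_le zero_le_one] at hy
      have hp := (one_add_pos h1 hy).ne'
      have h := (((hasDerivAt_id y).const_mul t).const_add 1).fun_pow (m + 1)
      have h' := h.fun_inv (pow_ne_zero _ hp)
      refine h'.congr_deriv ?_
      simp only [id]
      field_simp
      push_cast
      simp
      ring
    have hbp := intervalIntegral.integral_mul_deriv_eq_deriv_mul
      (u := fun y => q.eval y) (u' := fun y => (derivative q).eval y)
      (v := fun y : ℝ => ((1 + t * y) ^ (m + 1))⁻¹) (fun y _ => q.hasDerivAt y) hd hI1 hI2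
    simp only [hv0, hv1, zero_mul, sub_zero, zero_sub] at hbp
    have e1 : (∫ y in (0:ℝ)..1, q.eval y * (-((m:ℝ) + 1) * t / (1 + t * y) ^ (m + 2)))
        = (-((m:ℝ) + 1) * t) * ∫ y in (0:ℝ)..1, q.eval y / (1 + t * y) ^ (m + 1 + 1) := by
      rw [← intervalIntegral.integral_const_mul]
      congr 1; ext y; ring
    rw [e1] at hbp
    rw [Function.iterate_succ', Function.comp_apply, ← hq]
    simp only [div_eq_mul_inv] at hbp ih' ⊢
    have e2 : (∫ y in (0:ℝ)..1, (derivative q).eval y * ((1 + t * y) ^ (m + 1))⁻¹)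
      = ((m:ℝ) + 1) * t * ∫ y in (0:ℝ)..1, q.eval y * ((1 + t * y) ^ (m + 1 + 1))⁻¹ := by linarith
    rw [e2]
    have e3 : m + (j + 1) = m + 1 + j := by ring
    have e4 : m + 1 + (j + 1) = m + 1 + 1 + j := by ring
    rw [e3, e4]
    rw [Nat.factorial_succ] at ih'
    push_cast at ih'
    linear_combination t * ih'

open Polynomial in
lemma legendre_int {t : ℝ} (h1 : -1 < t) (n : ℕ) :
    ∫ y in (0:ℝ)..1, (∑ k ∈ range (n + 1), (-1 : ℝ) ^ k * n.choose k * (n + k).choose n * y ^ k) / (1 + t * y)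
     = t ^ n * ∫ y in (0:ℝ)..1, (y ^ n * (1 - y) ^ n) / (1 + t * y) ^ (n + 1) := by
  set p : ℝ[X] := X ^ n * (1 - X) ^ n with hp
  have hr : (n.factorial : ℝ[X]) * (shiftedLegendre n).map (Int.castRingHom ℝ) = derivative^[n] p := by
    have := congrArg (Polynomial.map (Int.castRingHom ℝ)) (factorial_mul_shiftedLegendre_eq n)
    rw [← Polynomial.iterate_derivative_map] at this
    simpa [hp] using this
  have hs : ∀ y : ℝ, (n.factorial : ℝ) *
      (∑ k ∈ range (n + 1), (-1 : ℝ) ^ k * n.choose k * (n + k).choose n * y ^ k)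
      = (derivative^[n] p).eval y := by
    intro y
    rw [← hr]
    simp [shiftedLegendre, Polynomial.eval_finsetSum, Polynomial.map_sum]
  have hv : ∀ i < n, (derivative^[i] p).eval 0 = 0 ∧ (derivative^[i] p).eval 1 = 0 := by
    intro i hi
    constructor
    · have hd := pow_sub_dvd_iterate_derivative_of_pow_dvd (q := X) (p := p) (n := n) i (Dvd.intro _ rfl)
      obtain ⟨r, hr⟩ := hd
      rw [hr]
      simp [show n - i ≠ 0 by omega]
    · have hd := pow_sub_dvd_iterate_derivative_of_pow_dvd (q := 1 - X) (p := p) (n := n) i (Dvd.intro_left _ rfl)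
      obtain ⟨r, hr⟩ := hd
      rw [hr]
      simp [show n - i ≠ 0 by omega]
  have h := parts h1 p n 0 hv
  simp only [← hs] at h
  have hf : (n.factorial : ℝ) ≠ 0 := by positivity
  apply mul_left_cancel₀ hf
  rw [← intervalIntegral.integral_const_mul]
  simp [hp] at h
  rw [add_comm 1 n] at h
  calc _ = _ := by
        congr 1; ext y; rw [← mul_div_assoc]
    _ = _ := h
    _ = _ := by ring

lemma term_eq {t : ℝ} (h1 : -1 < t) (n : ℕ) :
    Blog t n * Real.log (1 + t) - Alog t n
      = ∫ y in (0:ℝ)..1, t / (1 + t * y) * (t ^ 2 * y * (1 - y) / (1 + t * y)) ^ n := by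
  have hI : ∀ k : ℕ, IntervalIntegrable (fun y : ℝ => y ^ k / (1 + t * y)) MeasureTheory.volume 0 1 := by
    intro k
    have := (cont_div h1 (fun y => y ^ k) (by fun_prop) 1).intervalIntegrable (μ := MeasureTheory.volume)
    simpa using this
  have hL : Blog t n * Real.log (1 + t) - Alog t n = t ^ (n + 1) *
    ∫ y in (0:ℝ)..1, (∑ k ∈ range (n + 1), (-1 : ℝ) ^ k * n.choose k * (n + k).choose n * y ^ k) / (1 + t * y) := by
    simp only [Finset.sum_div, mul_div_assoc]
    rw [intervalIntegral.integral_finsetSum (fun k _ => (hI k).const_mul _)]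
    simp only [intervalIntegral.integral_const_mul]
    unfold Blog Alog
    rw [Finset.sum_mul, ← Finset.sum_sub_distrib, Finset.mul_sum]
    apply Finset.sum_congr rfl
    intro k hk
    have hk' : k ≤ n := by simp at hk; omega
    rw [← mul_sub, log_sub_clog h1 k]
    have e : t ^ (n + 1) = t ^ (n - k) * t ^ (k + 1) := by
      rw [← pow_add]; congr 1; omega
    rw [e, Nat.choose_symm_add]
    ring
  rw [hL, legendre_int h1, ← mul_assoc, ← intervalIntegral.integral_const_mul]
  congr 1; ext y
  rw [div_pow, mul_pow, mul_pow, ← pow_mul, div_mul_div_comm, pow_succ' (1 + t * y), mul_div_assoc']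
  congr 1
  ring

lemma ratio_bound {t : ℝ} (h1 : -1 < t) (h2 : t ≤ 1) : ∃ r : ℝ, 0 ≤ r ∧ r < 1 ∧
    ∀ y ∈ Set.Icc (0:ℝ) 1, |t ^ 2 * y * (1 - y) / (1 + t * y)| ≤ r := by
  have aux : ∀ y ∈ Set.Icc (0:ℝ) 1, |t ^ 2 * y * (1 - y) / (1 + t * y)| = t ^ 2 * y * (1 - y) / (1 + t * y) := by
    intro y hy
    have hp := one_add_pos h1 hy
    obtain ⟨h3, h4⟩ := hy
    have : 0 ≤ 1 - y := by linarith
    exact abs_of_nonneg (by positivity)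
  rcases le_total 0 t with h | h
  · refine ⟨1/4, by norm_num, by norm_num, fun y hy => ?_⟩
    rw [aux y hy, div_le_iff₀ (one_add_pos h1 hy)]
    obtain ⟨h3, h4⟩ := hy
    have a : t ^ 2 ≤ 1 := by nlinarith
    have b : 0 ≤ y * (1 - y) := mul_nonneg h3 (by linarith)
    nlinarith [mul_le_mul_of_nonneg_right a b, sq_nonneg (y - 1/2), mul_nonneg h h3]
  · refine ⟨t ^ 2, by positivity, by nlinarith, fun y hy => ?_⟩
    rw [aux y hy, div_le_iff₀ (one_add_pos h1 hy)]
    obtain ⟨h3, h4⟩ := hy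
    rw [mul_assoc]
    apply mul_le_mul_of_nonneg_left _ (sq_nonneg t)
    nlinarith

lemma sum_eq {t : ℝ} (h1 : -1 < t) (h2 : t ≤ 1) :
    ∑' n : ℕ, (Blog t n * Real.log (1 + t) - Alog t n)
      = ∫ y in (0:ℝ)..1, t / (1 + t * y) * (1 - t ^ 2 * y * (1 - y) / (1 + t * y))⁻¹ := by
  obtain ⟨r, hr0, hr1, hr⟩ := ratio_bound h1 h2
  simp only [term_eq h1]
  have hsub : ∀ y ∈ Set.uIoc (0:ℝ) 1, y ∈ Set.Icc (0:ℝ) 1 := by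
    intro y hy
    rw [Set.uIoc_of_le zero_le_one] at hy
    exact Set.Ioc_subset_Icc_self hy
  apply HasSum.tsum_eq
  apply intervalIntegral.hasSum_integral_of_dominated_convergence
    (bound := fun n y => |t / (1 + t * y)| * r ^ n)
  · intro n
    apply Measurable.aestronglyMeasurable
    fun_prop
  · intro n
    refine Filter.Eventually.of_forall fun y hy => ?_
    rw [Real.norm_eq_abs, abs_mul, abs_pow]
    gcongr
    exact hr y (hsub y hy)
  · refine Filter.Eventually.of_forall fun y hy => ?_
    exact (summable_geometric_of_lt_one hr0 hr1).mul_left _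
  · simp only [tsum_mul_left]
    apply IntervalIntegrable.mul_const
    have := (cont_div h1 (fun _ => t) (by fun_prop) 1).intervalIntegrable (μ := MeasureTheory.volume)
    simpa using this.abs
  · refine Filter.Eventually.of_forall fun y hy => ?_
    exact (hasSum_geometric_of_abs_lt_one ((hr y (hsub y hy)).trans_lt hr1)).mul_left _

lemma main_part {t : ℝ} (h1 : -1 < t) (h2 : t ≤ 1) :
    ∑' n : ℕ, (Blog t n * Real.log (1 + t) - Alog t n)
        = 2 / Real.sqrt (3 + 2 * t - t ^ 2) *
            (Real.arctan ((1 + t) / Real.sqrt (3 + 2 * t - t ^ 2))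
              - Real.arctan ((1 - t) / Real.sqrt (3 + 2 * t - t ^ 2))) := by
  rw [sum_eq h1 h2]
  have hD : 0 < 3 + 2 * t - t ^ 2 := by nlinarith
  have hs := Real.sq_sqrt hD.le
  have hs0 := Real.sqrt_pos.mpr hD
  set s := Real.sqrt (3 + 2 * t - t ^ 2)
  have hden : ∀ y : ℝ, 0 < s ^ 2 + (2 * t * y + (1 - t)) ^ 2 := fun y => by positivity
  have hcong : ∀ y ∈ Set.uIcc (0:ℝ) 1, t / (1 + t * y) * (1 - t ^ 2 * y * (1 - y) / (1 + t * y))⁻¹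
      = 4 * t / (s ^ 2 + (2 * t * y + (1 - t)) ^ 2) := by
    intro y hy
    rw [Set.uIcc_of_le zero_le_one] at hy
    have hp := (one_add_pos h1 hy).ne'
    have e : s ^ 2 + (2 * t * y + (1 - t)) ^ 2 = 4 * (1 + t * y - t ^ 2 * y * (1 - y)) := by
      rw [hs]; ring
    have hd := hden y
    rw [e] at hd ⊢
    have hd' : 1 + t * y - t ^ 2 * y * (1 - y) ≠ 0 := by
      intro h0; rw [h0] at hd; simp at hd
    have e2 : 1 - t ^ 2 * y * (1 - y) / (1 + t * y) = (1 + t * y - t ^ 2 * y * (1 - y)) / (1 + t * y) := by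
      rw [sub_div, div_self hp]
    rw [e2, inv_div, div_mul_div_cancel₀ hp, mul_div_mul_left _ _ (by norm_num)]
  rw [intervalIntegral.integral_congr hcong]
  have := intervalIntegral.integral_eq_sub_of_hasDerivAt (a := 0) (b := 1)
    (f := fun y => 2 / s * Real.arctan ((2 * t * y + (1 - t)) / s))
    (f' := fun y => 4 * t / (s ^ 2 + (2 * t * y + (1 - t)) ^ 2)) (fun y _ => by
      have h := (((((hasDerivAt_id y).const_mul (2 * t)).add_const (1 - t)).div_const s).arctan).const_mul (2 / s)
      refine h.congr_deriv ?_
      have hd := (hden y).ne'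
      simp only [id]
      have e : 1 + ((2 * t * y + (1 - t)) / s) ^ 2 = (s ^ 2 + (2 * t * y + (1 - t)) ^ 2) / s ^ 2 := by
        field_simp
      rw [e]
      field_simp
      ring)
    (by
      apply Continuous.intervalIntegrable
      exact Continuous.div (by fun_prop) (by fun_prop) (fun y => (hden y).ne'))
  rw [this]
  simp only [mul_one, mul_zero, zero_add]
  rw [show 2 * t + (1 - t) = 1 + t by ring]
  ring

/-- **Closed form of the error sum for `log(1+t)`.**
For `−1 < t ≤ 1`,
`∑ₙ (Bₙ(t) log(1+t) − Aₙ(t))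
  = (2/√(3+2t−t²)) (arctan((1+t)/√(3+2t−t²)) − arctan((1−t)/√(3+2t−t²)))`;
in particular for `t = 1` the error sum equals `π/4`. -/
theorem error_sum_log :
    (∀ t : ℝ, -1 < t → t ≤ 1 →
      ∑' n : ℕ, (Blog t n * Real.log (1 + t) - Alog t n)
        = 2 / Real.sqrt (3 + 2 * t - t ^ 2) *
            (Real.arctan ((1 + t) / Real.sqrt (3 + 2 * t - t ^ 2))
              - Real.arctan ((1 - t) / Real.sqrt (3 + 2 * t - t ^ 2)))) ∧
    ∑' n : ℕ, (Blog 1 n * Real.log 2 - Alog 1 n) = π / 4 := by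
  refine ⟨fun t h1 h2 => main_part h1 h2, ?_⟩
  have h := main_part (t := 1) (by norm_num) le_rfl
  rw [show (1:ℝ) + 1 = 2 by norm_num] at h
  rw [h, show (3:ℝ) + 2 * 1 - 1 ^ 2 = 2 ^ 2 by norm_num, Real.sqrt_sq (by norm_num)]
  norm_num
end

section
/- Let a, b be positive integers with 0 < a/b ≤ 1 and e·a² < 4b (where e = exp(1)). Then the number log(1 + a/b) is irrational. In particular, for every integer k ≥ 1 the number log(1 + 1/k) is irrational. -/
open Real

open Polynomial in
/-- A nonzero integer power of `e` is not a quotient of nonzero integers. -/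
theorem exp_int_not_rat (m A B : ℤ) (hm : m ≠ 0) (hA : A ≠ 0)
    (h : (B : ℝ) * Real.exp m = A) : False := by
  obtain ⟨c, hc⟩ := LindemannWeierstrass.exp_polynomial_approx (X - C m) (by simpa using hm)
  have ht : Filter.Tendsto (fun n : ℕ => (|(B : ℝ)| * c) * (c ^ n / (n.factorial : ℝ)))
      Filter.atTop (nhds 0) := by
    simpa using (FloorSemiring.tendsto_pow_div_factorial_atTop c).const_mul (|(B : ℝ)| * c)
  obtain ⟨N, hN⟩ := Filter.eventually_atTop.1 (ht.eventually_lt_const (zero_lt_one))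
  obtain ⟨p, hpN, hp⟩ := Nat.exists_infinite_primes (N + m.natAbs + A.natAbs + 1)
  obtain ⟨n, hn, g, -, hg⟩ := hc p (by simp; omega) hp
  have hr : (m : ℂ) ∈ (X - C m : ℤ[X]).aroots ℂ := by
    rw [mem_aroots]
    exact ⟨X_sub_C_ne_zero m, by simp⟩
  have h1 := hg hr
  have hgm : aeval (m : ℂ) g = ((g.eval m : ℤ) : ℂ) := by
    have := aeval_algebraMap_apply ℂ m g
    simpa using this
  rw [hgm] at h1
  have h2 : ((B : ℂ)) * Complex.exp m = A := by
    have := congrArg (fun x : ℝ => (x : ℂ)) h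
    simpa using this
  have h3 : (B : ℂ) * (n • Complex.exp m - p • ((g.eval m : ℤ) : ℂ))
      = ((n * A - p * (B * g.eval m) : ℤ) : ℂ) := by
    simp only [zsmul_eq_mul, nsmul_eq_mul]
    push_cast
    rw [← h2]
    ring
  have h4 : ‖((n * A - p * (B * g.eval m) : ℤ) : ℂ)‖ < 1 := by
    rw [← h3, norm_mul, Complex.norm_intCast]
    refine lt_of_le_of_lt (mul_le_mul_of_nonneg_left h1 (abs_nonneg _)) ?_
    have := hN (p - 1) (by omega)
    have hpp : c ^ p = c * c ^ (p - 1) := by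
      rw [← pow_succ', Nat.sub_add_cancel hp.one_le]
    rw [hpp]
    calc _ = _ := by ring
      _ < 1 := this
  rw [Complex.norm_intCast] at h4
  have h5 : n * A - p * (B * g.eval m) = 0 := by
    rw [← Int.abs_lt_one_iff]
    exact_mod_cast h4
  have h6 : (p : ℤ) ∣ n * A := ⟨B * g.eval m, by linarith⟩
  rcases (Nat.prime_iff_prime_int.1 hp).dvd_or_dvd h6 with h7 | h7
  · exact hn h7
  · have := Nat.le_of_dvd (Int.natAbs_pos.2 hA) (Int.natCast_dvd.1 h7)
    omega

/-- The logarithm of a rational number larger than one is irrational. -/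
theorem irrational_log_one_add_div (a b : ℕ) (ha : 0 < a) (hb : 0 < b) :
    Irrational (Real.log (1 + (a : ℝ) / b)) := by
  rintro ⟨q, hq⟩
  have ha' : (0 : ℝ) < a := by exact_mod_cast ha
  have hb' : (0 : ℝ) < b := by exact_mod_cast hb
  have hx : (1 : ℝ) < 1 + (a : ℝ) / b := by
    have := div_pos ha' hb'
    linarith
  have hpos := Real.log_pos hx
  have hq0 : q.num ≠ 0 := by
    rw [← hq] at hpos
    exact (Rat.num_pos.2 (by exact_mod_cast hpos)).ne'
  have hd : (q.den : ℝ) ≠ 0 := by exact_mod_cast q.den_nz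
  have hqn : (q.num : ℝ) = q.den * Real.log (1 + (a : ℝ) / b) := by
    rw [← hq]
    exact_mod_cast (Rat.den_mul_eq_num q).symm
  refine exp_int_not_rat q.num (((b + a) ^ q.den : ℕ) : ℤ) ((b ^ q.den : ℕ) : ℤ) hq0 ?_ ?_
  · have : 0 < (b + a) ^ q.den := by positivity
    exact_mod_cast this.ne'
  · rw [hqn, Real.exp_nat_mul, Real.exp_log (by linarith)]
    push_cast
    rw [← mul_pow]
    congr 1
    field_simp

/-- **Irrationality of `log(1 + a/b)`.**
If `a, b` are positive integers with `a/b ≤ 1` and `e a² < 4b`, then `log(1 + a/b)` is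
irrational; in particular `log(1 + 1/k)` is irrational for every integer `k ≥ 1`. -/
theorem irrational_log_one_add :
    (∀ a b : ℕ, 0 < a → 0 < b → (a : ℝ) / b ≤ 1 → Real.exp 1 * a ^ 2 < 4 * b →
      Irrational (Real.log (1 + (a : ℝ) / b))) ∧
    (∀ k : ℕ, 1 ≤ k → Irrational (Real.log (1 + 1 / (k : ℝ)))) := by
  refine ⟨fun a b ha hb _ _ => irrational_log_one_add_div a b ha hb, fun k hk => ?_⟩
  simpa using irrational_log_one_add_div 1 k one_pos hk
end

section
/- With Apéry's sequences B_n, A_n for ζ(2), one has ∑_{n=0}^∞ |B_n·ζ(2) − A_n| = ∑_{n=0}^∞ ∑_{k=0}^∞ C(n+k,n) / ( (2n+k+1)² · C(2n+k,n)² ). -/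
open Finset Real

/-- Apéry's denominators for `ζ(2)`: `Bₙ = ∑_{k=0}^n C(n,k)² C(n+k,k)`. -/
noncomputable def aperyB2 (n : ℕ) : ℝ :=
  ∑ k ∈ range (n + 1), (Nat.choose n k : ℝ) ^ 2 * (Nat.choose (n + k) k : ℝ)

/-- Apéry's numerators for `ζ(2)`:
`Aₙ = ∑_{k=0}^n C(n,k)² C(n+k,k) (2 ∑_{m=1}^n (−1)^{m−1}/m²
  + ∑_{m=1}^k (−1)^{n+m−1}/(m² C(n,m) C(n+m,m)))`. -/
noncomputable def aperyA2 (n : ℕ) : ℝ :=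
  ∑ k ∈ range (n + 1), (Nat.choose n k : ℝ) ^ 2 * (Nat.choose (n + k) k : ℝ) *
    (2 * (∑ m ∈ Icc 1 n, (-1 : ℝ) ^ (m - 1) / (m : ℝ) ^ 2)
      + ∑ m ∈ Icc 1 k,
          (-1 : ℝ) ^ (n + m - 1) /
            ((m : ℝ) ^ 2 * (Nat.choose n m : ℝ) * (Nat.choose (n + m) m : ℝ)))

noncomputable def certC0 (n : ℝ) : ℝ := 840 * n ^ 0 + 4388 * n ^ 1 + 9678 * n ^ 2 + 11679 * n ^ 3 + 8328 * n ^ 4 + 3510 * n ^ 5 + 810 * n ^ 6 + 79 * n ^ 7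
noncomputable def certC1 (n : ℝ) : ℝ := 1760 * n ^ 0 + 7720 * n ^ 1 + 13902 * n ^ 2 + 13159 * n ^ 3 + 6909 * n ^ 4 + 1909 * n ^ 5 + 217 * n ^ 6
noncomputable def certC2 (n : ℝ) : ℝ := 1317 * n ^ 0 + 4744 * n ^ 1 + 6744 * n ^ 2 + 4733 * n ^ 3 + 1641 * n ^ 4 + 225 * n ^ 5
noncomputable def certC3 (n : ℝ) : ℝ := 397 * n ^ 0 + 1155 * n ^ 1 + 1240 * n ^ 2 + 584 * n ^ 3 + 102 * n ^ 4
noncomputable def certC4 (n : ℝ) : ℝ := 30 * n ^ 0 + 69 * n ^ 1 + 52 * n ^ 2 + 13 * n ^ 3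
noncomputable def certC5 (n : ℝ) : ℝ := 7 * n ^ 0 + 11 * n ^ 1 + 4 * n ^ 2
noncomputable def certC6 (n : ℝ) : ℝ := 1 * n ^ 0 + 1 * n ^ 1

/-! ### The remainder series -/

/-- Summand of the double series. -/
noncomputable def sTerm (n k : ℕ) : ℝ :=
  (Nat.choose (n + k) n : ℝ) /
    ((2 * (n : ℝ) + k + 1) ^ 2 * (Nat.choose (2 * n + k) n : ℝ) ^ 2)

lemma ch_diag (n k : ℕ) :
    (Nat.choose (n + 1) (k + 1) : ℝ) = Nat.choose n k * (n + 1) / (k + 1) := by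
  have h := Nat.add_one_mul_choose_eq n k
  have h' : ((n : ℝ) + 1) * Nat.choose n k = Nat.choose (n + 1) (k + 1) * (k + 1) := by
    exact_mod_cast h
  have : (k : ℝ) + 1 ≠ 0 := by positivity
  field_simp
  linarith

lemma ch_up (a b : ℕ) :
    (Nat.choose (a + b + 1) a : ℝ) = Nat.choose (a + b) a * (a + b + 1) / (b + 1) := by
  have h := ch_diag (a + b) b
  rw [show Nat.choose (a + b + 1) a = Nat.choose (a + b + 1) (b + 1) from
    Nat.choose_symm_of_eq_add (by ring), h, ← Nat.choose_symm_add]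
  push_cast
  ring

lemma sTerm_nonneg (n k : ℕ) : 0 ≤ sTerm n k := by
  unfold sTerm; positivity

lemma sTerm_le (n k : ℕ) : sTerm n k ≤ 1 / ((k : ℝ) + 1) ^ 2 := by
  unfold sTerm
  have h1 : 0 < (Nat.choose (2 * n + k) n : ℝ) := by
    exact_mod_cast Nat.choose_pos (by omega)
  have h2 : (Nat.choose (n + k) n : ℝ) ≤ Nat.choose (2 * n + k) n := by
    exact_mod_cast Nat.choose_le_choose n (by omega)
  have h3 : (1 : ℝ) ≤ Nat.choose (2 * n + k) n := by
    exact_mod_cast Nat.choose_pos (by omega)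
  rw [div_le_div_iff₀ (by positivity) (by positivity)]
  have h4 : (Nat.choose (n + k) n : ℝ) ≤ (Nat.choose (2 * n + k) n : ℝ) ^ 2 := by nlinarith
  have h5 : ((k : ℝ) + 1) ^ 2 ≤ (2 * (n : ℝ) + k + 1) ^ 2 := by
    gcongr
    have : (0 : ℝ) ≤ n := by positivity
    linarith
  calc _ ≤ (Nat.choose (2 * n + k) n : ℝ) ^ 2 * (2 * (n : ℝ) + k + 1) ^ 2 := by gcongr
    _ = _ := by ring

lemma sTerm_succ_right (n k : ℕ) :
    sTerm n (k + 1) = sTerm n k *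
      (((n : ℝ) + k + 1) ^ 3 / ((k + 1) * (2 * n + k + 2) ^ 2)) := by
  unfold sTerm
  have h1 : 0 < (Nat.choose (2 * n + k) n : ℝ) := by
    exact_mod_cast Nat.choose_pos (by omega)
  have e1 := ch_up n k
  have e2 := ch_up n (n + k)
  rw [show n + (n + k) = 2 * n + k by ring] at e2
  rw [show n + (k + 1) = n + k + 1 by ring, show 2 * n + (k + 1) = 2 * n + k + 1 by ring, e1, e2]
  push_cast
  field_simp
  ring

lemma sTerm_succ_left (n k : ℕ) :
    sTerm (n + 1) k = sTerm n k *
      (((n : ℝ) + 1) * (n + k + 1) ^ 3 / ((2 * n + k + 2) * (2 * n + k + 3)) ^ 2) := by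
  unfold sTerm
  have h1 : 0 < (Nat.choose (2 * n + k) n : ℝ) := by
    exact_mod_cast Nat.choose_pos (by omega)
  have e1 := ch_diag (n + k) n
  have e2 := ch_up n (n + k)
  rw [show n + (n + k) = 2 * n + k by ring] at e2
  have e3 := ch_diag (2 * n + k + 1) n
  rw [show n + 1 + k = n + k + 1 by ring, show 2 * (n + 1) + k = 2 * n + k + 1 + 1 by ring,
    e1, e3, e2]
  push_cast
  field_simp
  ring

noncomputable def certP (n k : ℝ) : ℝ :=
  certC6 n * k ^ 6 + certC5 n * k ^ 5 - certC4 n * k ^ 4 - certC3 n * k ^ 3 - certC2 n * k ^ 2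
    - certC1 n * k - certC0 n

noncomputable def certG (n k : ℕ) : ℝ :=
  k * certP n k / ((2 * (n : ℝ) + k + 2) * (2 * n + k + 3) * (2 * n + k + 4)) ^ 2 * sTerm n k

lemma certP_abs (n k : ℝ) (hn : 0 ≤ n) (hk : 0 ≤ k) :
    |certP n k| ≤ (certC6 n + certC5 n + certC4 n + certC3 n + certC2 n + certC1 n + certC0 n)
      * (k + 1) ^ 6 := by
  have p0 : 0 ≤ certC0 n := by unfold certC0; positivity
  have p1 : 0 ≤ certC1 n := by unfold certC1; positivity
  have p2 : 0 ≤ certC2 n := by unfold certC2; positivity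
  have p3 : 0 ≤ certC3 n := by unfold certC3; positivity
  have p4 : 0 ≤ certC4 n := by unfold certC4; positivity
  have p5 : 0 ≤ certC5 n := by unfold certC5; positivity
  have p6 : 0 ≤ certC6 n := by unfold certC6; positivity
  have key : ∀ i : ℕ, i ≤ 6 → k ^ i ≤ (k + 1) ^ 6 := fun i hi =>
    (pow_le_pow_left₀ hk (by linarith) i).trans (pow_le_pow_right₀ (by linarith) hi)
  have q0 := mul_le_mul_of_nonneg_left (key 0 (by norm_num)) p0
  have q1 := mul_le_mul_of_nonneg_left (key 1 (by norm_num)) p1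
  have q2 := mul_le_mul_of_nonneg_left (key 2 (by norm_num)) p2
  have q3 := mul_le_mul_of_nonneg_left (key 3 (by norm_num)) p3
  have q4 := mul_le_mul_of_nonneg_left (key 4 (by norm_num)) p4
  have q5 := mul_le_mul_of_nonneg_left (key 5 (by norm_num)) p5
  have q6 := mul_le_mul_of_nonneg_left (key 6 (by norm_num)) p6
  have r0 := mul_nonneg p0 (pow_nonneg hk 0)
  have r1 := mul_nonneg p1 (pow_nonneg hk 1)
  have r2 := mul_nonneg p2 (pow_nonneg hk 2)
  have r3 := mul_nonneg p3 (pow_nonneg hk 3)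
  have r4 := mul_nonneg p4 (pow_nonneg hk 4)
  have r5 := mul_nonneg p5 (pow_nonneg hk 5)
  have r6 := mul_nonneg p6 (pow_nonneg hk 6)
  simp only [pow_zero, pow_one, mul_one] at q0 q1 r0 r1
  unfold certP
  rw [abs_le]
  constructor <;> linarith

lemma certG_tendsto (n : ℕ) : Filter.Tendsto (certG n) Filter.atTop (nhds 0) := by
  set C : ℝ := certC6 n + certC5 n + certC4 n + certC3 n + certC2 n + certC1 n + certC0 n with hC
  have hC0 : 0 ≤ C := by
    rw [hC]; unfold certC6 certC5 certC4 certC3 certC2 certC1 certC0; positivity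
  have hlim : Filter.Tendsto (fun k : ℕ => C * (1 / ((k : ℝ) + 1))) Filter.atTop (nhds 0) := by
    simpa using (tendsto_one_div_add_atTop_nhds_zero_nat (𝕜 := ℝ)).const_mul C
  refine squeeze_zero_norm (fun k => ?_) hlim
  have hP := certP_abs n k (by positivity) (by positivity)
  rw [← hC] at hP
  have hs := sTerm_le n k
  have hs0 := sTerm_nonneg n k
  have hn : (0 : ℝ) ≤ n := by positivity
  have hk : (0 : ℝ) ≤ k := by positivity
  have hD : ((k : ℝ) + 1) ^ 6 ≤
      ((2 * (n : ℝ) + k + 2) * (2 * n + k + 3) * (2 * n + k + 4)) ^ 2 := by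
    calc ((k : ℝ) + 1) ^ 6 = (((k : ℝ) + 1) * (k + 1) * (k + 1)) ^ 2 := by ring
      _ ≤ _ := by gcongr <;> linarith
  unfold certG
  rw [Real.norm_eq_abs, abs_mul, abs_div, abs_mul, abs_of_nonneg hk, abs_of_nonneg hs0,
    abs_of_nonneg (a := _ ^ 2) (sq_nonneg _)]
  calc _ ≤ ((k : ℝ) + 1) * (C * (k + 1) ^ 6) / (k + 1) ^ 6 * (1 / (k + 1) ^ 2) := by
        gcongr
        linarith
    _ = _ := by field_simp

lemma sTerm_rec (n k : ℕ) :
    ((n : ℝ) + 2) ^ 2 * sTerm (n + 2) k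
      = ((n : ℝ) + 1) ^ 2 * sTerm n k
        - (11 * ((n : ℝ) + 1) ^ 2 + 11 * (n + 1) + 3) * sTerm (n + 1) k
        + (certG n (k + 1) - certG n k) := by
  have h2 := sTerm_succ_left (n + 1) k
  rw [show n + 1 + 1 = n + 2 by ring, sTerm_succ_left n k] at h2
  unfold certG
  rw [h2, sTerm_succ_left n k, sTerm_succ_right n k]
  unfold certP certC6 certC5 certC4 certC3 certC2 certC1 certC0
  push_cast
  field_simp
  ring

lemma sTerm_sum_rec (n K : ℕ) :
    ((n : ℝ) + 2) ^ 2 * ∑ k ∈ range K, sTerm (n + 2) k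
      = ((n : ℝ) + 1) ^ 2 * ∑ k ∈ range K, sTerm n k
        - (11 * ((n : ℝ) + 1) ^ 2 + 11 * (n + 1) + 3) * ∑ k ∈ range K, sTerm (n + 1) k
        + certG n K := by
  induction K with
  | zero => simp [certG]
  | succ K ih =>
    have := sTerm_rec n K
    simp only [sum_range_succ, mul_add]
    linarith

/-! ### Apéry's sequences -/

noncomputable def bb (n k : ℕ) : ℝ := (Nat.choose n k : ℝ) ^ 2 * (Nat.choose (n + k) k : ℝ)

noncomputable def cc (z : ℝ) (n k : ℕ) : ℝ :=
  2 * (∑ m ∈ Icc 1 n, (-1 : ℝ) ^ (m - 1) / (m : ℝ) ^ 2)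
      + ∑ m ∈ Icc 1 k,
          (-1 : ℝ) ^ (n + m - 1) /
            ((m : ℝ) ^ 2 * (Nat.choose n m : ℝ) * (Nat.choose (n + m) m : ℝ)) - z

noncomputable def DD (z : ℝ) (n : ℕ) : ℝ := ∑ k ∈ range (n + 1), bb n k * cc z n k

lemma DD_eq (z : ℝ) (n : ℕ) : DD z n = aperyA2 n - aperyB2 n * z := by
  unfold DD aperyA2 aperyB2 bb cc
  rw [sum_mul, ← sum_sub_distrib]
  exact sum_congr rfl fun k _ => by ring

lemma cc_succ_right (z : ℝ) (n k : ℕ) :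
    cc z n (k + 1) = cc z n k + (-1 : ℝ) ^ (n + k) /
      (((k : ℝ) + 1) ^ 2 * (Nat.choose n (k + 1) : ℝ) * (Nat.choose (n + k + 1) (k + 1) : ℝ)) := by
  unfold cc
  rw [sum_Icc_succ_top (by omega : 1 ≤ k + 1)]
  rw [show n + (k + 1) - 1 = n + k by omega, show n + (k + 1) = n + k + 1 by ring]
  push_cast
  ring

lemma cc_succ_zero (z : ℝ) (n : ℕ) :
    cc z (n + 1) 0 = cc z n 0 + 2 * (-1 : ℝ) ^ n / ((n : ℝ) + 1) ^ 2 := by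
  unfold cc
  rw [sum_Icc_succ_top (by omega : 1 ≤ n + 1)]
  simp
  ring

lemma ch_fact (a b : ℕ) :
    (Nat.choose (a + b) a : ℝ) = (a + b).factorial / (a.factorial * b.factorial) := by
  rw [Nat.cast_add_choose]

/-- Increment in the second index, in factorial form. -/
lemma cc_incr (z : ℝ) (k j : ℕ) :
    cc z (k + 1 + j) (k + 1) = cc z (k + 1 + j) k + (-1 : ℝ) ^ (j + 1) *
      ((k.factorial : ℝ) ^ 2 * j.factorial / (2 * k + j + 2).factorial) := by
  rw [cc_succ_right, ch_fact (k + 1) j,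
    show k + 1 + j + k + 1 = (k + 1) + (k + 1 + j) by ring, ch_fact (k + 1) (k + 1 + j),
    show k + 1 + (k + 1 + j) = 2 * k + j + 2 by ring, Nat.factorial_succ k,
    show k + 1 + j + k = 2 * k + (j + 1) by ring, pow_add, pow_mul]
  have h1 : ((k + 1 + j).factorial : ℝ) ≠ 0 := by positivity
  have h2 : ((2 * k + j + 2).factorial : ℝ) ≠ 0 := by positivity
  push_cast
  field_simp
  simp

lemma cc_diff (z : ℝ) (k : ℕ) : ∀ j : ℕ,
    cc z (k + j + 1) k = cc z (k + j) k + (-1 : ℝ) ^ j * 2 / ((k : ℝ) + j + 1) *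
      ((k.factorial : ℝ) ^ 2 * j.factorial / (2 * k + j + 1).factorial) := by
  induction k with
  | zero =>
    intro j
    simp only [zero_add]
    rw [cc_succ_zero, mul_zero, zero_add, Nat.factorial_succ]
    push_cast
    field_simp
    simp
    ring
  | succ k ih =>
    intro j
    have e1 := cc_incr z k j
    have e2 := cc_incr z k (j + 1)
    have e3 := ih (j + 1)
    rw [show k + 1 + (j + 1) = k + 1 + j + 1 by ring] at e2
    rw [show k + (j + 1) + 1 = k + 1 + j + 1 by ring, show k + (j + 1) = k + 1 + j by ring] at e3
    rw [e2, e3, e1, show 2 * (k + 1) + j + 1 = 2 * k + j + 2 + 1 by ring,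
      show 2 * k + (j + 1) + 2 = 2 * k + j + 2 + 1 by ring,
      show 2 * k + (j + 1) + 1 = 2 * k + j + 2 by ring,
      Nat.factorial_succ (2 * k + j + 2), Nat.factorial_succ k, Nat.factorial_succ j]
    have h2 : ((2 * k + j + 2).factorial : ℝ) ≠ 0 := by positivity
    push_cast
    rw [pow_succ, pow_succ]
    field_simp
    ring

lemma bb_fact (k j : ℕ) :
    bb (k + j) k = ((k + j).factorial : ℝ) * (2 * k + j).factorial /
      ((k.factorial : ℝ) ^ 3 * (j.factorial : ℝ) ^ 2) := by
  unfold bb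
  rw [ch_fact, show k + j + k = k + (k + j) by ring, ch_fact,
    show k + (k + j) = 2 * k + j by ring]
  have h1 : ((k + j).factorial : ℝ) ≠ 0 := by positivity
  field_simp

lemma bb_cc_X (z : ℝ) (n k : ℕ) :
    bb n k * cc z n k = bb n k * cc z (n + 1) k
      - (-1 : ℝ) ^ (n + k) * 2 * Nat.choose n k / (((n : ℝ) + 1) * (n + k + 1)) := by
  rcases lt_or_ge n k with h | h
  · simp [bb, Nat.choose_eq_zero_of_lt h]
  · obtain ⟨j, rfl⟩ := Nat.exists_eq_add_of_le h
    rw [cc_diff, bb_fact, ch_fact, show k + j + k = 2 * k + j by ring, pow_add, pow_mul,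
      Nat.factorial_succ]
    have h1 : ((k + j).factorial : ℝ) ≠ 0 := by positivity
    have h2 : ((2 * k + j).factorial : ℝ) ≠ 0 := by positivity
    push_cast
    simp only [even_two, Even.neg_pow, one_pow, one_mul]
    field_simp
    ring

lemma bb_cc_Y (z : ℝ) (k j : ℕ) :
    bb (k + j + 1) k * cc z (k + j + 1) k = bb (k + j + 1) k * cc z (k + j) k
      + (-1 : ℝ) ^ j * 2 * Nat.choose (k + j + 1) k / (((k : ℝ) + j + 1) * (j + 1)) := by
  rw [cc_diff, show k + j + 1 = k + (j + 1) by ring, bb_fact, ch_fact,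
    show 2 * k + (j + 1) = 2 * k + j + 1 by ring, Nat.factorial_succ j]
  have h1 : ((k + (j + 1)).factorial : ℝ) ≠ 0 := by positivity
  have h2 : ((2 * k + j + 1).factorial : ℝ) ≠ 0 := by positivity
  push_cast
  field_simp

lemma bb_cc_Z (z : ℝ) (k j : ℕ) :
    bb (k + j + 1) k * cc z (k + j + 1) k = bb (k + j + 1) k * cc z (k + j + 1) (k + 1)
      + (-1 : ℝ) ^ j * Nat.choose (k + j + 1) k / (((j : ℝ) + 1) * (2 * k + j + 2)) := by
  rw [show k + j + 1 = k + 1 + j by ring, cc_incr, show k + 1 + j = k + (j + 1) by ring,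
    bb_fact, ch_fact,
    show 2 * k + (j + 1) = 2 * k + j + 1 by ring, Nat.factorial_succ j,
    Nat.factorial_succ (2 * k + j + 1), pow_succ]
  have h1 : ((k + (j + 1)).factorial : ℝ) ≠ 0 := by positivity
  have h2 : ((2 * k + j + 1).factorial : ℝ) ≠ 0 := by positivity
  push_cast
  field_simp
  ring

noncomputable def pp (N k : ℝ) : ℝ := k ^ 2 + 3 * (2 * N + 1) * k - 11 * N ^ 2 - 9 * N - 2

/-- Zeilberger step for the denominators. -/
lemma bb_rec (k j : ℕ) :
    ((k : ℝ) + j + 2) ^ 2 * bb (k + j + 2) (k + 1)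
      - (11 * ((k : ℝ) + j + 1) ^ 2 + 11 * (k + j + 1) + 3) * bb (k + j + 1) (k + 1)
      - ((k : ℝ) + j + 1) ^ 2 * bb (k + j) (k + 1)
    = pp (k + j + 1) (k + 1) * bb (k + j + 1) (k + 1) - pp (k + j + 1) k * bb (k + j + 1) k := by
  have a1 : (Nat.choose (k + j) (k + 1) : ℝ) = Nat.choose (k + j) k * j / (k + 1) := by
    have h := Nat.choose_succ_right_eq (k + j) k
    rw [show k + j - k = j by omega] at h
    have h' : (Nat.choose (k + j) (k + 1) : ℝ) * (k + 1) = Nat.choose (k + j) k * j := by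
      exact_mod_cast h
    field_simp
    linarith
  have a2 := ch_up k j
  have a3 := ch_diag (k + j) k
  have a4 := ch_diag (k + j + 1) k
  have b1 := ch_diag (k + j + k) k
  have b2 := ch_up k (k + j)
  rw [show k + (k + j) = k + j + k by ring] at b2
  have b3 := ch_diag (k + j + k + 1) k
  have b4 := ch_up k (k + j + 1)
  rw [show k + (k + j + 1) = k + j + k + 1 by ring] at b4
  have b5 := ch_diag (k + j + k + 1 + 1) k
  unfold bb pp
  rw [show k + j + (k + 1) = k + j + k + 1 by ring,
    show k + j + 1 + (k + 1) = k + j + k + 1 + 1 by ring,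
    show k + j + 2 + (k + 1) = k + j + k + 1 + 1 + 1 by ring,
    show k + j + 1 + k = k + j + k + 1 by ring,
    show k + j + 2 = k + j + 1 + 1 by ring, a4, a3, a2, a1, b5, b4, b3, b2, b1]
  push_cast
  field_simp
  ring

noncomputable def LTerm (z : ℝ) (n k : ℕ) : ℝ :=
  ((n : ℝ) + 2) ^ 2 * (bb (n + 2) k * cc z (n + 2) k)
      - (11 * ((n : ℝ) + 1) ^ 2 + 11 * (n + 1) + 3) * (bb (n + 1) k * cc z (n + 1) k)
      - ((n : ℝ) + 1) ^ 2 * (bb n k * cc z n k)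

noncomputable def HH (n k : ℕ) : ℝ := (-1 : ℝ) ^ (n + k) * 3 * k * Nat.choose (n + 1) k / (n + 1)

lemma LTerm_step (z : ℝ) (k j : ℕ) :
    LTerm z (k + j) (k + 1)
      = pp (k + j + 1) (k + 1) * (bb (k + j + 1) (k + 1) * cc z (k + j + 1) (k + 1))
        + HH (k + j) (k + 1)
        - (pp (k + j + 1) k * (bb (k + j + 1) k * cc z (k + j + 1) k) + HH (k + j) k) := by
  have r := bb_rec k j
  have x := bb_cc_X z (k + j) (k + 1)
  have y := bb_cc_Y z (k + 1) j
  have w := bb_cc_Z z k j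
  rw [show k + 1 + j + 1 = k + j + 2 by ring, show k + 1 + j = k + j + 1 by ring] at y
  unfold LTerm HH
  rw [x, y, w]
  have r' : ((k : ℝ) + j + 2) ^ 2 * (bb (k + j + 2) (k + 1) * cc z (k + j + 1) (k + 1))
      - (11 * ((k : ℝ) + j + 1) ^ 2 + 11 * (k + j + 1) + 3)
        * (bb (k + j + 1) (k + 1) * cc z (k + j + 1) (k + 1))
      - ((k : ℝ) + j + 1) ^ 2 * (bb (k + j) (k + 1) * cc z (k + j + 1) (k + 1))
    = pp (k + j + 1) (k + 1) * (bb (k + j + 1) (k + 1) * cc z (k + j + 1) (k + 1))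
      - pp (k + j + 1) k * (bb (k + j + 1) k * cc z (k + j + 1) (k + 1)) := by
    linear_combination cc z (k + j + 1) (k + 1) * r
  have a1 : (Nat.choose (k + j) (k + 1) : ℝ) = Nat.choose (k + j) k * j / (k + 1) := by
    have h := Nat.choose_succ_right_eq (k + j) k
    rw [show k + j - k = j by omega] at h
    have h' : (Nat.choose (k + j) (k + 1) : ℝ) * (k + 1) = Nat.choose (k + j) k * j := by
      exact_mod_cast h
    field_simp
    linarith
  have a2 := ch_up k j
  have a3 := ch_diag (k + j) k
  have a4 := ch_diag (k + j + 1) k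
  rw [show k + j + 2 = k + j + 1 + 1 by ring] at *
  rw [a4, a3, a2, a1]
  have s1 : (-1 : ℝ) ^ (k + j + (k + 1)) = - (-1) ^ j := by
    rw [show k + j + (k + 1) = 2 * k + (j + 1) by ring, pow_add, pow_mul]; simp [pow_succ]
  have s2 : (-1 : ℝ) ^ (k + j + k) = (-1) ^ j := by
    rw [show k + j + k = 2 * k + j by ring, pow_add, pow_mul]; simp
  rw [s1, s2]
  push_cast
  push_cast at r'
  rw [← sub_eq_zero] at r' ⊢
  rw [← r']
  unfold pp
  field_simp
  ring

lemma LTerm_sum (z : ℝ) (n K : ℕ) (hK : K ≤ n + 1) :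
    ∑ k ∈ range (K + 1), LTerm z n k
      = pp (n + 1) K * (bb (n + 1) K * cc z (n + 1) K) + HH n K := by
  induction K with
  | zero =>
    have h1 := cc_succ_zero z n
    have h2 := cc_succ_zero z (n + 1)
    rw [show n + 1 + 1 = n + 2 by ring, pow_succ] at h2
    have h1' : cc z n 0 = cc z (n + 1) 0 - 2 * (-1 : ℝ) ^ n / ((n : ℝ) + 1) ^ 2 := by linarith
    simp only [zero_add, sum_range_one, LTerm, HH, bb, pp]
    rw [h1', h2]
    simp
    field_simp
    ring
  | succ K ih =>
    rw [sum_range_succ, ih (by omega)]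
    obtain ⟨j, rfl⟩ := Nat.exists_eq_add_of_le (show K ≤ n by omega)
    have := LTerm_step z K j
    push_cast at this ⊢
    rw [this]
    ring

lemma central_ch (N : ℕ) :
    (Nat.choose (N + 1 + (N + 1)) (N + 1) : ℝ)
      = 2 * (2 * N + 1) / (N + 1) * Nat.choose (N + N) N := by
  have e1 := ch_diag (N + N + 1) N
  have e2 := ch_up N N
  rw [show N + 1 + (N + 1) = N + N + 1 + 1 by ring, e1, e2]
  push_cast
  field_simp
  ring

lemma DD_rec (z : ℝ) (n : ℕ) :
    ((n : ℝ) + 2) ^ 2 * DD z (n + 2)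
      = (11 * ((n : ℝ) + 1) ^ 2 + 11 * (n + 1) + 3) * DD z (n + 1)
        + ((n : ℝ) + 1) ^ 2 * DD z n := by
  have h := LTerm_sum z n (n + 1) le_rfl
  have hs : ∑ k ∈ range (n + 1 + 1), LTerm z n k
      = ((n : ℝ) + 2) ^ 2 * (DD z (n + 2) - bb (n + 2) (n + 2) * cc z (n + 2) (n + 2))
        - (11 * ((n : ℝ) + 1) ^ 2 + 11 * (n + 1) + 3) * DD z (n + 1)
        - ((n : ℝ) + 1) ^ 2 * DD z n := by
    unfold LTerm
    rw [sum_sub_distrib, sum_sub_distrib, ← mul_sum, ← mul_sum, ← mul_sum]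
    have d2 : DD z (n + 2) = ∑ k ∈ range (n + 1 + 1), bb (n + 2) k * cc z (n + 2) k
        + bb (n + 2) (n + 2) * cc z (n + 2) (n + 2) := by
      unfold DD; rw [sum_range_succ]
    have d0 : ∑ k ∈ range (n + 1 + 1), bb n k * cc z n k = DD z n := by
      unfold DD; rw [sum_range_succ _ (n + 1)]; simp [bb]
    rw [d2, d0]
    unfold DD
    ring
  rw [hs] at h
  -- the last term
  have c1 := cc_incr z (n + 1) 0
  have c2 := cc_diff z (n + 1) 0
  simp only [add_zero, zero_add, pow_zero, pow_one, Nat.factorial_zero, Nat.cast_zero,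
    Nat.cast_one] at c1 c2
  rw [show n + 1 + 1 = n + 2 by ring] at c1 c2
  rw [c2] at c1
  have hb1 : bb (n + 1) (n + 1) = Nat.choose (n + 1 + (n + 1)) (n + 1) := by simp [bb]
  have hb2 : bb (n + 2) (n + 2) = 2 * (2 * ((n : ℝ) + 1) + 1) / (n + 2) *
      Nat.choose (n + 1 + (n + 1)) (n + 1) := by
    have := central_ch (n + 1)
    simp only [bb, Nat.choose_self]
    rw [show n + 2 = n + 1 + 1 by ring, this]
    push_cast
    field_simp
    ring
  rw [hb1, hb2, c1] at h
  rw [ch_fact (n + 1) (n + 1), show n + 1 + (n + 1) = 2 * (n + 1) by ring,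
    Nat.factorial_succ (2 * (n + 1) + 1), Nat.factorial_succ (2 * (n + 1))] at h
  have hf1 : ((2 * (n + 1)).factorial : ℝ) ≠ 0 := by positivity
  have hf2 : ((n + 1).factorial : ℝ) ≠ 0 := by positivity
  have s1 : (-1 : ℝ) ^ (n + (n + 1)) = - 1 := by
    rw [show n + (n + 1) = 2 * n + 1 by ring, pow_add, pow_mul]; simp
  unfold HH pp at h
  rw [s1, Nat.choose_self] at h
  push_cast at h
  rw [← sub_eq_zero] at h ⊢
  rw [← h]
  field_simp
  ring

/-! ### Conclusion -/

lemma sTerm_zero_eq (k : ℕ) : sTerm 0 k = 1 / ((k : ℝ) + 1) ^ 2 := by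
  simp [sTerm]

lemma sTerm_one_sum (K : ℕ) : ∑ k ∈ range K, sTerm 1 k
    = 5 - 3 * ∑ k ∈ range K, sTerm 0 k
      - (3 * (1 / ((K : ℝ) + 1)) ^ 2 + 2 * (1 / ((K : ℝ) + 1 + 1)) ^ 2
        + 3 * (1 / ((K : ℝ) + 1 + 1))) := by
  induction K with
  | zero => norm_num
  | succ K ih =>
    rw [sum_range_succ, sum_range_succ, ih, sTerm_succ_left 0 K, sTerm_zero_eq]
    push_cast
    field_simp
    ring

lemma tendsto_zero_sum : Filter.Tendsto (fun K => ∑ k ∈ range K, sTerm 0 k) Filter.atTop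
    (nhds (π ^ 2 / 6)) := by
  have h := (hasSum_nat_add_iff' 1).mpr hasSum_zeta_two
  simp only [sum_range_one, Nat.cast_zero, ne_eq, OfNat.ofNat_ne_zero, not_false_eq_true,
    zero_pow, div_zero, sub_zero] at h
  refine h.tendsto_sum_nat.congr fun K => sum_congr rfl fun k _ => ?_
  rw [sTerm_zero_eq]; push_cast; rfl

lemma DD_zero (z : ℝ) : DD z 0 = -z := by
  simp [DD, bb, cc]

lemma DD_one (z : ℝ) : DD z 1 = 5 - 3 * z := by
  simp [DD, bb, cc, sum_range_succ]
  ring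

lemma tendsto_sum (n : ℕ) :
    Filter.Tendsto (fun K => ∑ k ∈ range K, sTerm n k) Filter.atTop
      (nhds ((-1 : ℝ) ^ (n + 1) * DD (π ^ 2 / 6) n)) ∧
    Filter.Tendsto (fun K => ∑ k ∈ range K, sTerm (n + 1) k) Filter.atTop
      (nhds ((-1 : ℝ) ^ (n + 2) * DD (π ^ 2 / 6) (n + 1))) := by
  induction n with
  | zero =>
    constructor
    · simpa [DD_zero] using tendsto_zero_sum
    · have t1 := tendsto_one_div_add_atTop_nhds_zero_nat (𝕜 := ℝ)
      have t2 := (Filter.tendsto_add_atTop_iff_nat 1).mpr t1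
      push_cast at t2
      have := ((tendsto_zero_sum.const_mul 3).const_sub 5).sub
        ((((t1.pow 2).const_mul 3).add ((t2.pow 2).const_mul 2)).add (t2.const_mul 3))
      convert this using 2
      · rename_i K
        rw [zero_add, sTerm_one_sum]
      · simp [DD_one]
  | succ n ih =>
    refine ⟨ih.2, ?_⟩
    have t := (((ih.1.const_mul (((n : ℝ) + 1) ^ 2)).sub
      (ih.2.const_mul (11 * ((n : ℝ) + 1) ^ 2 + 11 * (n + 1) + 3))).add
        (certG_tendsto n)).const_mul ((((n : ℝ) + 2) ^ 2)⁻¹)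
    convert t using 2
    · rename_i K
      rw [← sTerm_sum_rec]
      field_simp
    · have h := DD_rec (π ^ 2 / 6) n
      rw [show n + 1 + 1 = n + 2 by ring, show n + 1 + 2 = n + 3 by ring]
      rw [eq_inv_mul_iff_mul_eq₀ (by positivity)]
      linear_combination (-1 : ℝ) ^ (n + 3) * h

/-- **The absolute error sum of Apéry's continued fraction for `ζ(2)` as a double series.**
`∑ₙ |Bₙ ζ(2) − Aₙ| = ∑ₙ ∑ₖ C(n+k,n)/((2n+k+1)² C(2n+k,n)²)`, where `ζ(2) = π²/6`. -/
theorem error_sum_abs_apery_zeta_two :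
    ∑' n : ℕ, |aperyB2 n * (π ^ 2 / 6) - aperyA2 n|
      = ∑' n : ℕ, ∑' k : ℕ,
          (Nat.choose (n + k) n : ℝ) /
            ((2 * (n : ℝ) + k + 1) ^ 2 * (Nat.choose (2 * n + k) n : ℝ) ^ 2) := by
  refine tsum_congr fun n => ?_
  have h := (hasSum_iff_tendsto_nat_of_nonneg (sTerm_nonneg n) _).mpr (tendsto_sum n).1
  have h1 := h.tsum_eq
  have h0 : 0 ≤ (-1 : ℝ) ^ (n + 1) * DD (π ^ 2 / 6) n := by
    rw [← h1]; exact tsum_nonneg (sTerm_nonneg n)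
  change _ = ∑' k, sTerm n k
  rw [h1, ← abs_of_nonneg h0, abs_mul, abs_pow, abs_neg, abs_one, one_pow, one_mul, DD_eq,
    abs_sub_comm]
end
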